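/- arXiv:1011.3267 — 4 statements merged into one kernel-verified Lean document; each statement's English description precedes it below -/
import Mathlib

section
/- Let g be complex semisimple of rank ℓ, dim g = ℓ + 2r, and d the Lie algebra coboundary on ∧g (via the Killing form identification). Then x ∈ g is singular (dim g^x > ℓ) if and only if (dx)^r = 0 in ∧^{2r} g. -/
open ExteriorAlgebra Module

section Bivector

variable {K V : Type*} [Field K] [AddCommGroup V] [Module K V]

/-- Interior product with `f` on the exterior algebra. -/
noncomputable abbrev ExteriorAlgebra.interior (f : Dual K V) :
    ExteriorAlgebra K V →ₗ[K] ExteriorAlgebra K V :=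
  CliffordAlgebra.contractLeft (Q := (0 : QuadraticForm K V)) f

theorem ExteriorAlgebra.interior_ι_mul (f : Dual K V) (a : V) (y : ExteriorAlgebra K V) :
    interior f (ι K a * y) = f a • y - ι K a * interior f y :=
  CliffordAlgebra.contractLeft_ι_mul ..

theorem ExteriorAlgebra.interior_ι (f : Dual K V) (a : V) :
    interior f (ι K a) = algebraMap K _ (f a) :=
  CliffordAlgebra.contractLeft_ι ..

theorem ExteriorAlgebra.interior_one (f : Dual K V) :
    interior f (1 : ExteriorAlgebra K V) = 0 :=
  CliffordAlgebra.contractLeft_one ..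

theorem ExteriorAlgebra.interior_ι_mul_ι (f : Dual K V) (a b : V) :
    interior f (ι K a * ι K b) = f a • ι K b - f b • ι K a := by
  rw [interior_ι_mul, interior_ι, ← Algebra.commutes, ← Algebra.smul_def]

theorem ExteriorAlgebra.interior_ι_mul_ι_mul (f : Dual K V) (a b : V)
    (y : ExteriorAlgebra K V) :
    interior f (ι K a * ι K b * y) =
      interior f (ι K a * ι K b) * y + ι K a * ι K b * interior f y := by
  rw [interior_ι_mul_ι, mul_assoc, interior_ι_mul, interior_ι_mul]
  simp only [mul_sub, sub_mul, smul_mul_assoc, mul_smul_comm, mul_assoc]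
  abel

theorem ExteriorAlgebra.commute_ι_mul_ι_ι (a b c : V) : Commute (ι K a * ι K b) (ι K c) := by
  have h (x y : V) : ι K x * ι K y = -(ι K y * ι K x) :=
    eq_neg_of_add_eq_zero_left (ι_add_mul_swap x y)
  rw [Commute, SemiconjBy, mul_assoc, h b c, mul_neg, ← mul_assoc, h a c, neg_mul, neg_neg,
    mul_assoc]

/-- The bivector of a linear map `A : V* → V`, half the image of the corresponding tensor. -/
noncomputable def ExteriorAlgebra.bivector {κ : Type*} [Fintype κ] (b : Basis κ K V)
    (A : Dual K V →ₗ[K] V) : ExteriorAlgebra K V :=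
  (1 / 2 : K) • ∑ i, ι K (b i) * ι K (A (b.coord i))

variable {κ : Type*} [Fintype κ] (b : Basis κ K V)

theorem ExteriorAlgebra.interior_bivector_mul (A : Dual K V →ₗ[K] V) (f : Dual K V)
    (y : ExteriorAlgebra K V) :
    interior f (bivector b A * y) = interior f (bivector b A) * y + bivector b A * interior f y := by
  simp only [bivector, smul_mul_assoc, Finset.sum_mul, map_smul, map_sum, interior_ι_mul_ι_mul,
    Finset.sum_add_distrib, smul_add]

theorem ExteriorAlgebra.interior_bivector_pow (A : Dual K V →ₗ[K] V) (f : Dual K V)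
    (h : interior f (bivector b A) = 0) (k : ℕ) : interior f (bivector b A ^ k) = 0 := by
  induction k with
  | zero => rw [pow_zero, interior_one]
  | succ k ih => rw [pow_succ', interior_bivector_mul, h, ih, zero_mul, mul_zero, add_zero]

theorem LinearMap.dual_apply_swap_of_alternating {A : Dual K V →ₗ[K] V}
    (hA : ∀ f : Dual K V, f (A f) = 0) (f g : Dual K V) : f (A g) = -g (A f) := by
  have h := hA (f + g)
  simp only [map_add, LinearMap.add_apply, hA] at h
  linear_combination h

theorem ExteriorAlgebra.interior_bivector [NeZero (2 : K)] {A : Dual K V →ₗ[K] V}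
    (hA : ∀ f : Dual K V, f (A f) = 0) (f : Dual K V) :
    interior f (bivector b A) = ι K (A f) := by
  classical
  have h1 : ∑ i, f (b i) • A (b.coord i) = A f := by
    simp only [← map_smul, ← map_sum, b.sum_dual_apply_smul_coord f]
  have h2 : ∑ i, f (A (b.coord i)) • b i = -A f := by
    simp only [LinearMap.dual_apply_swap_of_alternating hA f, neg_smul, Finset.sum_neg_distrib,
      Basis.coord_apply, b.sum_repr]
  simp only [bivector, map_smul, map_sum, interior_ι_mul_ι, Finset.sum_sub_distrib]
  simp only [← map_smul (ι K), ← map_sum (ι K), h1, h2, ← map_sub (ι K)]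
  congr 1
  rw [sub_neg_eq_add, ← two_smul K, smul_smul, one_div, inv_mul_cancel₀ two_ne_zero, one_smul]

/-- The map `A` with the hyperbolic plane spanned by `f` and `g` removed. -/
noncomputable def LinearMap.removePlane (A : Dual K V →ₗ[K] V) (f g : Dual K V) :
    Dual K V →ₗ[K] V :=
  A - (Dual.eval K V (A f)).smulRight (A g) + (Dual.eval K V (A g)).smulRight (A f)

theorem LinearMap.removePlane_apply (A : Dual K V →ₗ[K] V) (f g h : Dual K V) :
    A.removePlane f g h = A h - h (A f) • A g + h (A g) • A f := rfl

theorem LinearMap.removePlane_alternating {A : Dual K V →ₗ[K] V} (hA : ∀ f : Dual K V, f (A f) = 0)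
    (f g h : Dual K V) : h (A.removePlane f g h) = 0 := by
  simp only [removePlane_apply, map_add, map_sub, map_smul, hA, smul_eq_mul]
  ring

theorem ExteriorAlgebra.bivector_eq_removePlane_add [NeZero (2 : K)] (A : Dual K V →ₗ[K] V)
    (f g : Dual K V) :
    bivector b A = bivector b (A.removePlane f g) + ι K (A f) * ι K (A g) := by
  classical
  have h1 : ∑ i, ι K (b i) * ι K ((b.coord i (A f)) • A g) = ι K (A f) * ι K (A g) := by
    simp only [map_smul, mul_smul_comm, ← smul_mul_assoc, ← Finset.sum_mul]
    simp only [← map_smul, ← map_sum, Basis.coord_apply, b.sum_repr]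
  have h2 : ∑ i, ι K (b i) * ι K ((b.coord i (A g)) • A f) = -(ι K (A f) * ι K (A g)) := by
    rw [eq_neg_of_add_eq_zero_left (ι_add_mul_swap (A f) (A g)), neg_neg]
    simp only [map_smul, mul_smul_comm, ← smul_mul_assoc, ← Finset.sum_mul]
    simp only [← map_smul, ← map_sum, Basis.coord_apply, b.sum_repr]
  simp only [bivector, LinearMap.removePlane_apply, map_add, map_sub, mul_add, mul_sub,
    Finset.sum_add_distrib, Finset.sum_sub_distrib, h1, h2]
  have h3 : ι K (A f) * ι K (A g) = (1 / 2 : K) • ((2 : K) • (ι K (A f) * ι K (A g))) := by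
    rw [smul_smul, one_div, inv_mul_cancel₀ two_ne_zero, one_smul]
  nth_rw 3 [h3]
  rw [← smul_add, two_smul]
  congr 1
  abel

theorem add_pow_succ_of_mul_self_eq_zero {R : Type*} [Ring R] {u p : R} (h : Commute p u)
    (hp : p * p = 0) (k : ℕ) : (u + p) ^ (k + 1) = u ^ (k + 1) + (k + 1) • (p * u ^ k) := by
  induction k with
  | zero => simp
  | succ k ih =>
    have h0 : p * u ^ k * p = 0 := by rw [(h.pow_right k).eq, mul_assoc, hp, mul_zero]
    rw [pow_succ, ih, add_mul, mul_add, mul_add, smul_mul_assoc, smul_mul_assoc, h0, smul_zero,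
      mul_assoc p, ← pow_succ, ← pow_succ, ← (h.pow_right (k + 1)).eq, succ_nsmul _ (k + 1)]
    abel

theorem ExteriorAlgebra.bivector_pow_succ_eq_zero_iff [CharZero K] {A : Dual K V →ₗ[K] V}
    (hA : ∀ f : Dual K V, f (A f) = 0) {f g : Dual K V} (hfg : g (A f) = 1) (k : ℕ) :
    bivector b A ^ (k + 1) = 0 ↔ bivector b (A.removePlane f g) ^ k = 0 := by
  have hgf : f (A g) = -1 := by rw [LinearMap.dual_apply_swap_of_alternating hA, hfg]
  have hA' := LinearMap.removePlane_alternating hA f g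
  have hf : interior f (bivector b (A.removePlane f g)) = 0 := by
    rw [interior_bivector b hA', LinearMap.removePlane_apply, hA, hgf]
    simp
  have hg : interior g (bivector b (A.removePlane f g)) = 0 := by
    rw [interior_bivector b hA', LinearMap.removePlane_apply, hA, hfg]
    simp
  have hcomm : Commute (ι K (A f) * ι K (A g)) (bivector b (A.removePlane f g)) := by
    refine (Commute.sum_right _ _ _ fun i _ => ?_).smul_right _
    exact (commute_ι_mul_ι_ι ..).mul_right (commute_ι_mul_ι_ι ..)
  have hsq : ι K (A f) * ι K (A g) * (ι K (A f) * ι K (A g)) = 0 := by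
    rw [← mul_assoc, (commute_ι_mul_ι_ι (A f) (A g) (A f)).eq, ← mul_assoc, ι_sq_zero,
      zero_mul, zero_mul]
  rw [bivector_eq_removePlane_add b A f g, add_pow_succ_of_mul_self_eq_zero hcomm hsq]
  constructor
  · intro h
    have hp : interior f (ι K (A f) * ι K (A g)) = ι K (A f) := by
      rw [interior_ι_mul_ι, hA, hgf, zero_smul, zero_sub, neg_smul, neg_neg, one_smul]
    have h' := congrArg (fun y => interior g (interior f y)) h
    simp only [map_add, map_nsmul, map_zero, interior_bivector_pow b _ f hf,
      interior_ι_mul_ι_mul, hp, mul_zero, add_zero, zero_add] at h'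
    rw [interior_ι_mul, hfg, interior_bivector_pow b _ g hg, mul_zero, sub_zero, one_smul] at h'
    rw [← Nat.cast_smul_eq_nsmul K] at h'
    exact (smul_eq_zero.mp h').resolve_left (by exact_mod_cast k.succ_ne_zero)
  · intro h
    rw [pow_succ, h, zero_mul, mul_zero, smul_zero, add_zero]

theorem LinearMap.finrank_ker_removePlane [FiniteDimensional K V] {A : Dual K V →ₗ[K] V}
    (hA : ∀ f : Dual K V, f (A f) = 0) {f g : Dual K V} (hfg : g (A f) = 1) :
    finrank K (A.removePlane f g).ker = finrank K A.ker + 2 := by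
  have hgf : f (A g) = -1 := by rw [LinearMap.dual_apply_swap_of_alternating hA, hfg]
  let φ : (A.removePlane f g).ker →ₗ[K] K × K :=
    ((Dual.eval K V (A f)).prod (Dual.eval K V (A g))).domRestrict _
  have hφ (h : (A.removePlane f g).ker) : φ h = (h.1 (A f), h.1 (A g)) := rfl
  have hle : A.ker ≤ (A.removePlane f g).ker := fun h hh => by
    rw [LinearMap.mem_ker] at hh ⊢
    simp [removePlane_apply, LinearMap.dual_apply_swap_of_alternating hA h, hh]
  have hker : φ.ker = A.ker.comap (A.removePlane f g).ker.subtype := by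
    ext ⟨h, hh⟩
    rw [LinearMap.mem_ker, removePlane_apply] at hh
    simp only [LinearMap.mem_ker, Submodule.mem_comap, Submodule.subtype_apply, hφ, Prod.mk_eq_zero]
    constructor
    · rintro ⟨h1, h2⟩
      simpa [h1, h2] using hh
    · intro h0
      simp [LinearMap.dual_apply_swap_of_alternating hA h, h0]
  have hsurj : φ.range = ⊤ := by
    rw [LinearMap.range_eq_top]
    rintro ⟨s, t⟩
    have hf : A.removePlane f g f = 0 := by simp [removePlane_apply, hA, hgf]
    have hg : A.removePlane f g g = 0 := by simp [removePlane_apply, hA, hfg]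
    refine ⟨⟨s • g - t • f, by simp [hf, hg]⟩, ?_⟩
    simp [hφ, hA, hfg, hgf]
  have := LinearMap.finrank_range_add_finrank_ker (V := (A.removePlane f g).ker) (V₂ := K × K) φ
  rw [hsurj, finrank_top, Module.finrank_prod, finrank_self, hker,
    (Submodule.comapSubtypeEquivOfLe hle).finrank_eq] at this
  omega

/-- The `r`-th power of the bivector of an alternating map vanishes iff its rank is less
than `2 * r`. -/
theorem ExteriorAlgebra.bivector_pow_eq_zero_iff [CharZero K] [FiniteDimensional K V]
    {A : Dual K V →ₗ[K] V} (hA : ∀ f : Dual K V, f (A f) = 0) (r : ℕ) :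
    bivector b A ^ r = 0 ↔ finrank K V < finrank K A.ker + 2 * r := by
  induction r generalizing A with
  | zero =>
    have := A.ker.finrank_le
    rw [Subspace.dual_finrank_eq] at this
    simp [this]
  | succ r ih =>
    by_cases h0 : A = 0
    · subst h0
      rw [LinearMap.ker_zero, finrank_top, Subspace.dual_finrank_eq]
      simp [bivector]
    · obtain ⟨f, hf⟩ : ∃ f, A f ≠ 0 := by
        by_contra! h
        exact h0 (LinearMap.ext h)
      obtain ⟨g, hg⟩ := Projective.exists_dual_eq_one K hf
      rw [bivector_pow_succ_eq_zero_iff b hA hg,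
        ih (LinearMap.removePlane_alternating hA f g), LinearMap.finrank_ker_removePlane hA hg]
      omega

end Bivector

/-- Let `g` be complex semisimple of rank `ℓ` (`= dim H`, `H` a Cartan subalgebra), with
`dim g = ℓ + 2r`, and let `d` be the coboundary on `⋀ g` via the Killing-form
identification, so `dx = (1/2) ∑ᵢ wᵢ ∧ [zᵢ, x]` for Killing-dual bases.  Then `x ∈ g` is
singular (`dim g^x > ℓ`) if and only if `(dx)^r = 0` (in `⋀^{2r} g`). -/
theorem stmt11 (L : Type*) [LieRing L] [LieAlgebra ℂ L] [FiniteDimensional ℂ L]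
    [LieAlgebra.IsSemisimple ℂ L]
    (H : LieSubalgebra ℂ L) [H.IsCartanSubalgebra]
    (n r : ℕ) (hnr : n = finrank ℂ H + 2 * r) (hn : finrank ℂ L = n)
    (b : Basis (Fin n) ℂ L) (z : Fin n → L)
    (hdual : ∀ i j, killingForm ℂ L (b i) (z j) = if i = j then 1 else 0)
    (D : L → ExteriorAlgebra ℂ L)
    (hD : ∀ x : L, D x = (1/2 : ℂ) • ∑ i, ι ℂ (b i) * ι ℂ ⁅z i, x⁆) :
    ∀ x : L,
      finrank ℂ H < finrank ℂ (LinearMap.ker (LieAlgebra.ad ℂ L x)) ↔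
        (D x) ^ r = 0 := by
  intro x
  let S : Dual ℂ L →ₗ[ℂ] L := ∑ i, (Dual.eval ℂ L (b i)).smulRight (z i)
  have hS (h : Dual ℂ L) : S h = ∑ i, h (b i) • z i := by simp [S]
  have hBS (h : Dual ℂ L) (y : L) : killingForm ℂ L y (S h) = h y := by
    suffices (killingForm ℂ L).flip (S h) = h from LinearMap.congr_fun this y
    refine b.ext fun j => ?_
    simp [hS, hdual]
  have hSinj : Function.Injective S := fun h h' e => by
    ext y
    rw [← hBS h, ← hBS h', e]
  have hScoord (i : Fin n) : S (b.coord i) = z i := by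
    simp [hS, Finsupp.single_apply]
  let A : Dual ℂ L →ₗ[ℂ] L := -(LieAlgebra.ad ℂ L x) ∘ₗ S
  have hAapp (h : Dual ℂ L) : A h = ⁅S h, x⁆ := by simp [A]
  have hA (h : Dual ℂ L) : h (A h) = 0 := by
    rw [← hBS, hAapp, killingForm, LieModule.traceForm_comm, ← LieModule.traceForm_apply_lie_apply,
      lie_self, map_zero, LinearMap.zero_apply]
  have hker : finrank ℂ A.ker = finrank ℂ (LinearMap.ker (LieAlgebra.ad ℂ L x)) := by
    let e : Dual ℂ L ≃ₗ[ℂ] L := LinearEquiv.ofInjectiveOfFinrankEq S hSinj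
      Subspace.dual_finrank_eq
    have : A.ker = (LinearMap.ker (LieAlgebra.ad ℂ L x)).comap e.toLinearMap := by
      ext h
      simp [A, e]
    rw [this]
    exact (e.ofSubmodule' _).finrank_eq
  have hDx : D x = bivector b A := by
    simp only [hD, bivector, hAapp, hScoord]
  rw [hDx, bivector_pow_eq_zero_iff b hA, hker]
  omega
end

section
/- For any x ∈ g and any invariant polynomial p ∈ S(g)^G, the gradient ∇p(x) ∈ g (defined by B(∇p(x), y) = ∂_y p(x)) lies in the center of the centralizer g^x. -/
open Module MvPolynomial

/-- Directional derivative `∂_u P` of a polynomial `P` on a Lie algebra `L`, in the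
coordinates of a basis `b`. -/
noncomputable def dirDeriv {L : Type*} [LieRing L] [LieAlgebra ℂ L] {n : ℕ}
    (b : Basis (Fin n) ℂ L) (u : L) (P : MvPolynomial (Fin n) ℂ) :
    MvPolynomial (Fin n) ℂ :=
  ∑ i, MvPolynomial.C (b.repr u i) * MvPolynomial.pderiv i P

/-- Infinitesimal invariance of a polynomial function on `L` under the adjoint action. -/
noncomputable def IsInvariantPoly {L : Type*} [LieRing L] [LieAlgebra ℂ L] {n : ℕ}
    (b : Basis (Fin n) ℂ L) (P : MvPolynomial (Fin n) ℂ) : Prop :=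
  ∀ x y : L, MvPolynomial.eval (fun i => b.repr x i) (dirDeriv b ⁅y, x⁆ P) = 0

lemma dirDeriv_smul {L : Type*} [LieRing L] [LieAlgebra ℂ L] {n : ℕ}
    (b : Basis (Fin n) ℂ L) (c : ℂ) (u : L) (P : MvPolynomial (Fin n) ℂ) :
    dirDeriv b (c • u) P = C c * dirDeriv b u P := by
  simp [dirDeriv, Finset.mul_sum, mul_assoc]

/-- The differential of an invariant polynomial at `x` vanishes on `⁅y, L⁆` for every `y`
commuting with `x`. -/
lemma IsInvariantPoly.eval_dirDeriv_lie_eq_zero {L : Type*} [LieRing L] [LieAlgebra ℂ L] {n : ℕ}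
    {b : Basis (Fin n) ℂ L} {P : MvPolynomial (Fin n) ℂ} (hP : IsInvariantPoly b P)
    {x y : L} (hxy : ⁅y, x⁆ = 0) (z : L) :
    eval (fun i => b.repr x i) (dirDeriv b ⁅y, z⁆ P) = 0 := by
  set q : ℂ → ℂ := fun t => eval (fun i => b.repr (x + t • z) i) (dirDeriv b ⁅y, z⁆ P) with hq
  have hcont : Continuous q := by
    refine (MvPolynomial.continuous_eval _).comp (continuous_pi fun i => ?_)
    simp only [map_add, map_smul, Finsupp.add_apply, Finsupp.smul_apply]
    fun_prop
  have hzero : Set.EqOn q (fun _ => 0) {0}ᶜ := fun t ht => by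
    have h := hP (x + t • z) y
    rw [lie_add, lie_smul, hxy, zero_add, dirDeriv_smul, map_mul, eval_C] at h
    exact (mul_eq_zero.mp h).resolve_left ht
  have h0 := congrFun (hcont.ext_on (dense_compl_singleton 0) continuous_const hzero) 0
  simpa [hq] using h0

/-- For any `x ∈ g` and any invariant polynomial `P ∈ S(g)^G`, the gradient
`∇P(x) ∈ g` (defined by `B(∇P(x), y) = ∂_y P(x)` for the Killing form `B`) lies in the
center of the centralizer `g^x`: it commutes with `x` and with every `y` commuting
with `x`. -/
theorem stmt14 (L : Type*) [LieRing L] [LieAlgebra ℂ L] [FiniteDimensional ℂ L]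
    [LieAlgebra.IsSemisimple ℂ L]
    (n : ℕ) (hn : finrank ℂ L = n) (b : Basis (Fin n) ℂ L)
    (P : MvPolynomial (Fin n) ℂ) (hP : IsInvariantPoly b P)
    (g : L → L)
    (hgrad : ∀ x y : L, killingForm ℂ L (g x) y =
      MvPolynomial.eval (fun i => b.repr x i) (dirDeriv b y P)) :
    ∀ x : L, ⁅x, g x⁆ = 0 ∧ ∀ y : L, ⁅x, y⁆ = 0 → ⁅g x, y⁆ = 0 := by
  have hcomm : ∀ x y : L, ⁅x, y⁆ = 0 → ⁅g x, y⁆ = 0 := fun x y hxy => by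
    have hyx : ⁅y, x⁆ = 0 := by rw [← lie_skew, hxy, neg_zero]
    refine (LieAlgebra.IsKilling.killingForm_nondegenerate ℂ L).1 _ fun z => ?_
    rw [LieModule.traceForm_apply_lie_apply, hgrad]
    exact hP.eval_dirDeriv_lie_eq_zero hyx z
  exact fun x => ⟨by rw [← lie_skew, hcomm x x (lie_self x), neg_zero], hcomm x⟩
end

section
/- Let p₁,…,p_ℓ be homogeneous generators of S(g)^G. For x ∈ g, the gradients ∇p₁(x),…,∇p_ℓ(x) are linearly independent if and only if x is regular. Consequently, for y in a Cartan subalgebra h (with orthonormal basis v₁,…,v_ℓ of h), ∇p₁(y)∧⋯∧∇p_ℓ(y) = κ·(∏_{φ∈Δ₊} φ(y))·v₁∧⋯∧v_ℓ for a fixed nonzero constant κ. -/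
open Module MvPolynomial ExteriorAlgebra

theorem AlgebraicIndependent.linearIndependent_kaehlerD {k : Type*} {K : Type*} [Field k]
    [CharZero k] [Field K] [Algebra k K] {ι : Type*} {f : ι → K} (hf : AlgebraicIndependent k f) :
    LinearIndependent K fun i => KaehlerDifferential.D k K (f i) := by
  obtain ⟨s, hfs, hs⟩ := exists_isTranscendenceBasis_superset (s := Set.range f) hf.coe_range
  let A := MvPolynomial s k
  let : Algebra A K := (aeval (R := k) (Subtype.val : s → K)).toAlgebra
  have hmap : ∀ a : A, algebraMap A K a = aeval (R := k) (Subtype.val : s → K) a := fun _ => rfl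
  have : IsScalarTower k A K := IsScalarTower.of_algebraMap_eq fun r => by
    rw [hmap, MvPolynomial.algebraMap_eq, aeval_C]
  have : FaithfulSMul A K := (faithfulSMul_iff_algebraMap_injective A K).mpr hs.1
  let := FractionRing.liftAlgebra A K
  have := FractionRing.isScalarTower_liftAlgebra A K
  have : CharZero (FractionRing A) := charZero_of_injective_algebraMap (R := k)
    (FaithfulSMul.algebraMap_injective k (FractionRing A))
  have := hs.isAlgebraic
  have : Algebra.IsAlgebraic A K :=
    Algebra.IsAlgebraic.of_ringHom_of_comp_eq
      (S := Algebra.adjoin k (Set.range (Subtype.val : s → K)))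
      (B := K) hs.1.aevalEquiv (RingHom.id K) hs.1.aevalEquiv.surjective Function.injective_id (by
        ext a <;> simp [hmap])
  have : Algebra.IsAlgebraic (FractionRing A) K :=
    (IsFractionRing.comap_isAlgebraic_iff (A := A)).mp inferInstance
  have : Algebra.FormallyEtale (FractionRing A) K := Algebra.FormallyEtale.of_isSeparable _ _
  have : Algebra.FormallyEtale A (FractionRing A) :=
    Algebra.FormallyEtale.of_isLocalization (nonZeroDivisors A)
  have : Algebra.FormallyEtale A K := Algebra.FormallyEtale.comp A (FractionRing A) K
  let e := KaehlerDifferential.tensorKaehlerEquivOfFormallyEtale k A K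
  let B := ((KaehlerDifferential.mvPolynomialBasis k s).baseChange K).map e
  have hB : ∀ i : s, B i = KaehlerDifferential.D k K i := by
    intro i
    simp only [B, e, Basis.map_apply, Basis.baseChange_apply,
      KaehlerDifferential.mvPolynomialBasis_apply]
    erw [KaehlerDifferential.tensorKaehlerEquivOfFormallyEtale_apply,
      KaehlerDifferential.mapBaseChange_tmul]
    rw [KaehlerDifferential.map_D, hmap, aeval_X, one_smul]
  have := B.linearIndependent.comp (fun i => (⟨f i, hfs ⟨i, rfl⟩⟩ : s))
    (fun i j h => hf.injective (congrArg Subtype.val h))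
  convert this using 1
  ext i
  simp [hB]

/-- If polynomials `f i` are algebraically independent modulo a prime `q`, then their gradients
together with that of `q` are independent over the residue field of `q`, up to multiples of the
gradient of `q`. -/
theorem MvPolynomial.eq_zero_of_sum_smul_pderiv_eq {k K σ ι : Type*} [Field k]
    [CharZero k] [Field K]
    [Algebra k K] [Algebra (MvPolynomial σ k) K] [IsScalarTower k (MvPolynomial σ k) K]
    [Fintype ι] [Fintype σ] {f : ι → MvPolynomial σ k} {q : MvPolynomial σ k}
    (hq : algebraMap (MvPolynomial σ k) K q = 0)
    (hf : AlgebraicIndependent k fun i => algebraMap (MvPolynomial σ k) K (f i))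
    (c : ι → K) (l : K) (h : ∀ s, ∑ i, c i * algebraMap (MvPolynomial σ k) K (pderiv s (f i)) =
      l * algebraMap (MvPolynomial σ k) K (pderiv s q)) : c = 0 := by
  have hD : ∀ P : MvPolynomial σ k, KaehlerDifferential.D k K (algebraMap (MvPolynomial σ k) K P) =
      ∑ s, algebraMap (MvPolynomial σ k) K (pderiv s P) •
        KaehlerDifferential.D k K (algebraMap (MvPolynomial σ k) K (X s)) := by
    intro P
    have := congrArg (KaehlerDifferential.map k k (MvPolynomial σ k) K)
      ((KaehlerDifferential.mvPolynomialBasis k σ).sum_repr (KaehlerDifferential.D k _ P))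
    rw [KaehlerDifferential.map_D] at this
    rw [← this, map_sum]
    refine Finset.sum_congr rfl fun s _ => ?_
    rw [map_smul, KaehlerDifferential.mvPolynomialBasis_apply, KaehlerDifferential.map_D,
      KaehlerDifferential.mvPolynomialBasis_repr_apply, algebraMap_smul]
  refine _root_.funext (Fintype.linearIndependent_iff.mp hf.linearIndependent_kaehlerD c ?_)
  calc ∑ i, c i • KaehlerDifferential.D k K (algebraMap _ K (f i))
      = ∑ s, (∑ i, c i * algebraMap (MvPolynomial σ k) K (pderiv s (f i))) •
          KaehlerDifferential.D k K (algebraMap (MvPolynomial σ k) K (X s)) := by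
        simp_rw [Finset.sum_smul, mul_smul]
        rw [Finset.sum_comm]
        exact Finset.sum_congr rfl fun i _ => by rw [hD, Finset.smul_sum]
    _ = l • KaehlerDifferential.D k K (algebraMap _ K q) := by
        rw [hD q, Finset.smul_sum]
        exact Finset.sum_congr rfl fun s _ => by rw [h, mul_smul]
    _ = 0 := by rw [hq, map_zero, smul_zero]

namespace Matrix

section CommRing

variable {R n l : Type*} [CommRing R] [Fintype n] [DecidableEq n] [Fintype l] [DecidableEq l]

theorem det_add_mul_mul_det (A : Matrix n n R) (u : Matrix n Unit R)
    (v : Matrix Unit n R) :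
    (A + u * v).det * A.det = (A.det + (v * A.adjugate * u) () ()) * A.det := by
  have h1 : fromBlocks A u (-v) 1 * fromBlocks 1 (-(A.adjugate * u)) 0 (A.det • 1) =
      fromBlocks A 0 (-v) (v * A.adjugate * u + A.det • 1) := by
    rw [fromBlocks_multiply]
    congr 1 <;> simp [← Matrix.mul_assoc, mul_adjugate]
  have h2 := congrArg det h1
  rw [det_mul, det_fromBlocks_one₂₂, det_fromBlocks_zero₂₁, det_fromBlocks_zero₁₂] at h2
  simp only [Matrix.mul_neg, sub_neg_eq_add, det_one, one_mul, det_unique, smul_apply, smul_eq_mul,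
    add_apply] at h2
  simp only [PUnit.default_eq_unit, one_apply_eq, mul_one] at h2
  rw [h2]; ring

/-- The matrix determinant lemma over an arbitrary commutative ring. -/
theorem det_add_mul_eq_det_add (A : Matrix n n R) (u : Matrix n Unit R) (v : Matrix Unit n R) :
    (A + u * v).det = A.det + (v * A.adjugate * u) () () := by
  let f : Polynomial R →+* R := Polynomial.evalRingHom 0
  let A' : Matrix n n (Polynomial R) := charmatrix (-A)
  have hA : f.mapMatrix A' = A := by
    ext i j
    by_cases h : i = j
    · subst h; simp [A', f, charmatrix_apply_eq]
    · simp [A', f, charmatrix_apply_ne _ _ _ h]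
  have hreg : A'.det ∈ nonZeroDivisors (Polynomial R) :=
    (charpoly_monic (-A)).mem_nonZeroDivisors
  have h := (mul_cancel_right_mem_nonZeroDivisors hreg).mp
    (det_add_mul_mul_det A' (u.map Polynomial.C) (v.map Polynomial.C))
  have h' := congrArg f h
  have hu : (u.map Polynomial.C).map f = u := by ext; simp [f]
  have hv : (v.map Polynomial.C).map f = v := by ext; simp [f]
  have hA' : A'.map f = A := hA
  have hadj : A'.adjugate.map f = A.adjugate := by
    rw [← hA]; exact f.map_adjugate A'
  have hprod : f ((v.map Polynomial.C * A'.adjugate * u.map Polynomial.C) () ()) =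
      (v * A.adjugate * u) () () := by
    rw [← Matrix.map_apply (f := f), Matrix.map_mul, Matrix.map_mul, hu, hv, hadj]
  rw [map_add, hprod, RingHom.map_det, RingHom.map_det, hA, map_add] at h'
  simpa only [RingHom.mapMatrix_apply, Matrix.map_mul, hu, hv, hA'] using h'

/-- If `M * Q = 0`, then `det (M + U * W)` and `det (W * Q)` are proportional as functions
of `W`. -/
theorem det_add_mul_mul_det_mul {M : Matrix n n R} {Q : Matrix n l R} (hMQ : M * Q = 0)
    (U : Matrix n l R) (W W' : Matrix l n R) :
    (M + U * W').det * (W * Q).det = (M + U * W).det * (W' * Q).det := by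
  have h : fromBlocks (M + U * W) U (W - W') 1 * fromBlocks 1 (-Q) 0 (W * Q) =
      fromBlocks (M + U * W) 0 (W - W') (W' * Q) := by
    rw [fromBlocks_multiply]
    congr 1 <;> simp [Matrix.add_mul, hMQ, Matrix.sub_mul, Matrix.mul_assoc]
  have h2 := congrArg det h
  rw [det_mul, det_fromBlocks_one₂₂, det_fromBlocks_zero₂₁, det_fromBlocks_zero₁₂, det_one,
    one_mul, Matrix.mul_sub] at h2
  rwa [show M + U * W - (U * W - U * W') = M + U * W' by abel] at h2

theorem det_add_mul_mul_det_mul' {M : Matrix n n R} {P : Matrix l n R} (hPM : P * M = 0)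
    (U U' : Matrix n l R) (W : Matrix l n R) :
    (M + U' * W).det * (P * U).det = (M + U * W).det * (P * U').det := by
  have := det_add_mul_mul_det_mul (M := Mᵀ) (Q := Pᵀ) (by rw [← transpose_mul, hPM, transpose_zero])
    Wᵀ Uᵀ U'ᵀ
  simpa only [← transpose_mul, ← transpose_add, det_transpose] using this

end CommRing

end Matrix

theorem Derivation.map_finset_prod {k R ι : Type*} [CommRing k] [CommRing R] [Algebra k R]
    [DecidableEq ι] (δ : Derivation k R R) (s : Finset ι) (g : ι → R) :
    δ (∏ i ∈ s, g i) = ∑ i ∈ s, ∏ j ∈ s, if j = i then δ (g j) else g j := by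
  induction s using Finset.induction_on with
  | empty => simp
  | insert a s ha ih =>
    rw [Finset.prod_insert ha, δ.leibniz, ih, Finset.sum_insert ha, Finset.prod_insert ha]
    simp only [smul_eq_mul, if_true]
    rw [add_comm, Finset.mul_sum]
    congr 1
    · rw [mul_comm]
      congr 1
      exact Finset.prod_congr rfl fun j hj => by rw [if_neg (by rintro rfl; exact ha hj)]
    · refine Finset.sum_congr rfl fun i hi => ?_
      rw [Finset.prod_insert ha, if_neg (by rintro rfl; exact ha hi)]

/-- The derivative of a determinant, column by column. -/
theorem Derivation.map_det {k R n : Type*} [CommRing k] [CommRing R] [Algebra k R]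
    [Fintype n] [DecidableEq n] (δ : Derivation k R R) (N : Matrix n n R) :
    δ N.det = ∑ j, (N.updateCol j fun i => δ (N i j)).det := by
  simp_rw [Matrix.det_apply, map_sum, Units.smul_def, map_zsmul]
  rw [Finset.sum_comm]
  refine Finset.sum_congr rfl fun σ _ => ?_
  rw [← Finset.smul_sum, Derivation.map_finset_prod,
    ← Equiv.sum_comp σ.symm]
  congr 1
  rw [← Equiv.sum_comp σ]
  refine Finset.sum_congr rfl fun j _ => Finset.prod_congr rfl fun i _ => ?_
  simp only [Matrix.updateCol_apply, Equiv.symm_apply_apply]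
  split_ifs with h <;> simp [h]

/-- **Jacobi's formula**. -/
theorem Derivation.map_det_eq_trace {k R n : Type*} [CommRing k] [CommRing R] [Algebra k R]
    [Fintype n] [DecidableEq n] (δ : Derivation k R R) (N : Matrix n n R) :
    δ N.det = (N.adjugate * N.map δ).trace := by
  rw [δ.map_det, Matrix.trace]
  refine Finset.sum_congr rfl fun j _ => ?_
  rw [← Matrix.cramer_apply, Matrix.cramer_eq_adjugate_mulVec]
  rfl

theorem UniqueFactorizationMonoid.dvd_of_forall_prime {α : Type*} [CommMonoidWithZero α]
    [UniqueFactorizationMonoid α] {a b : α} (ha : a ≠ 0)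
    (h : ∀ q, Prime q → q ∣ a → ∃ d, ¬ q ∣ d ∧ a ∣ b * d) : a ∣ b := by
  induction a using UniqueFactorizationMonoid.induction_on_prime generalizing b with
  | h₁ => exact absurd rfl ha
  | h₂ a hu => exact hu.dvd
  | h₃ a p ha0 hp ih =>
    obtain ⟨b, rfl⟩ := ih ha0 fun q hq hqa => by
      obtain ⟨d, hd, hdvd⟩ := h q hq (hqa.mul_left p)
      exact ⟨d, hd, (Dvd.intro_left p rfl).trans hdvd⟩
    obtain ⟨d, hd, hdvd⟩ := h p hp (dvd_mul_right p a)
    rw [mul_comm p a, mul_assoc] at hdvd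
    have hpb : p ∣ b := (hp.dvd_or_dvd ((mul_dvd_mul_iff_left ha0).mp hdvd)).resolve_right hd
    rw [mul_comm]
    exact mul_dvd_mul_left a hpb

/-- A prime dividing all members of a family whose span is stable under a derivation divides its
own derivative. -/
theorem Derivation.prime_dvd_apply_of_mem_span {k R ι : Type*} [Field k] [CharZero k] [CommRing R]
    [IsDomain R] [UniqueFactorizationMonoid R] [Algebra k R] (δ : Derivation k R R) {F : ι → R}
    (hδ : ∀ i, δ (F i) ∈ Ideal.span (Set.range F)) {q : R} (hq : Prime q) {i₀ : ι}
    (hi₀ : F i₀ ≠ 0) (hF : ∀ i, q ∣ F i) : q ∣ δ q := by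
  classical
  have hex : ∃ m : ℕ, ¬ ∀ i, q ^ (m + 2) ∣ F i := by
    obtain ⟨m, hm⟩ := FiniteMultiplicity.of_prime_left hq hi₀
    exact ⟨m, fun h => hm ((pow_dvd_pow q (by lia)).trans (h i₀))⟩
  obtain ⟨m, hnot, hdvd⟩ : ∃ m : ℕ, (¬ ∀ i, q ^ (m + 2) ∣ F i) ∧ ∀ i, q ^ (m + 1) ∣ F i := by
    refine ⟨Nat.find hex, Nat.find_spec hex, ?_⟩
    rcases h : Nat.find hex with _ | m
    · simpa using hF
    · exact not_not.mp (Nat.find_min hex (m := m) (by lia))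
  push Not at hnot
  obtain ⟨i, hi⟩ := hnot
  obtain ⟨g, hg⟩ := hdvd i
  have hspan : q ^ (m + 1) ∣ δ (F i) := by
    rw [← Ideal.mem_span_singleton]
    refine Ideal.span_le.mpr ?_ (hδ i)
    rintro _ ⟨j, rfl⟩
    exact Ideal.mem_span_singleton.mpr (hdvd j)
  rw [hg, δ.leibniz, δ.leibniz_pow, smul_eq_mul,
    dvd_add_right (Dvd.intro _ rfl), Nat.add_sub_cancel, smul_eq_mul, smul_eq_mul, pow_succ,
    mul_smul_comm, mul_left_comm, nsmul_eq_mul, mul_left_comm,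
    mul_dvd_mul_iff_left (pow_ne_zero m hq.ne_zero)] at hspan
  rcases hq.dvd_or_dvd hspan with h | h
  · refine absurd (h.trans ?_) hq.not_dvd_one
    have : ((m + 1 : ℕ) : R) = algebraMap k R ((m + 1 : ℕ) : k) := by simp
    rw [this]
    exact ((Nat.cast_ne_zero.mpr m.succ_ne_zero : ((m + 1 : ℕ) : k) ≠ 0).isUnit.map (algebraMap k R)
      |>.dvd)
  · rcases hq.dvd_or_dvd h with h | h
    · refine absurd ?_ hi
      rw [hg, pow_succ q (m + 1)]
      exact mul_dvd_mul_left _ h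
    · exact h

theorem Derivation.sum_apply' {k R ι : Type*} [CommRing k] [CommRing R] [Algebra k R]
    (s : Finset ι) (δ : ι → Derivation k R R) (a : R) : (∑ i ∈ s, δ i) a = ∑ i ∈ s, δ i a := by
  rw [← Derivation.coeFnAddMonoidHom_apply, map_sum, Finset.sum_apply]
  rfl

namespace MvPolynomial

variable {k σ : Type*} [Field k] [Fintype σ]

/-- The derivation of the polynomial ring given by the linear vector field of a matrix. -/
noncomputable def linearDerivation (A : Matrix σ σ k) :
    Derivation k (MvPolynomial σ k) (MvPolynomial σ k) :=
  mkDerivation k fun i => ∑ j, C (A i j) * X j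

theorem linearDerivation_X (A : Matrix σ σ k) (i : σ) :
    linearDerivation A (X i) = ∑ j, C (A i j) * X j :=
  mkDerivation_X ..

theorem linearDerivation_apply (A : Matrix σ σ k) (P : MvPolynomial σ k) :
    linearDerivation A P = ∑ i, (∑ j, C (A i j) * X j) * pderiv i P := by
  classical
  have : linearDerivation A = ∑ i, (∑ j, C (A i j) * X j) • pderiv (R := k) i := by
    refine derivation_ext fun i => ?_
    rw [linearDerivation_X, Derivation.sum_apply']
    simp [pderiv_X, Pi.single_apply]
  rw [this, Derivation.sum_apply']
  simp

theorem IsHomogeneous.linearDerivation (A : Matrix σ σ k) {P : MvPolynomial σ k} {d : ℕ}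
    (hP : P.IsHomogeneous d) : (linearDerivation A P).IsHomogeneous d := by
  rcases Nat.eq_zero_or_pos d with rfl | hd
  · rw [← totalDegree_zero_iff_isHomogeneous, totalDegree_eq_zero_iff_eq_C] at hP
    rw [hP, derivation_C]
    exact isHomogeneous_zero ..
  · rw [linearDerivation_apply]
    refine IsHomogeneous.sum _ _ _ fun i _ => ?_
    rw [show d = 1 + (d - 1) by lia]
    refine IsHomogeneous.mul (IsHomogeneous.sum _ _ _ fun j _ => ?_) hP.pderiv
    simpa using (isHomogeneous_C σ (A i j)).mul (isHomogeneous_X k j)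

theorem totalDegree_linearDerivation_le (A : Matrix σ σ k) (P : MvPolynomial σ k) :
    (linearDerivation A P).totalDegree ≤ P.totalDegree := by
  conv_lhs => rw [← sum_homogeneousComponent P, map_sum]
  refine totalDegree_finsetSum_le fun i hi => ?_
  exact ((homogeneousComponent_isHomogeneous i P).linearDerivation A).totalDegree_le.trans
    (by simpa [Nat.lt_succ_iff] using hi)

theorem exists_linearDerivation_eq_C_mul {A : Matrix σ σ k} {q : MvPolynomial σ k} (hq0 : q ≠ 0)
    (hq : q ∣ linearDerivation A q) : ∃ c, linearDerivation A q = C c * q := by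
  obtain ⟨g, hg⟩ := hq
  by_cases hg0 : g = 0
  · exact ⟨0, by simp [hg, hg0]⟩
  have h := totalDegree_linearDerivation_le A q
  rw [hg, totalDegree_mul_of_isDomain hq0 hg0] at h
  have : g.totalDegree = 0 := by lia
  rw [totalDegree_eq_zero_iff_eq_C] at this
  exact ⟨coeff 0 g, by rw [hg, this, mul_comm, coeff_zero_C]⟩

theorem linearDerivation_lie [DecidableEq σ] (A B : Matrix σ σ k) (P : MvPolynomial σ k) :
    linearDerivation ⁅A, B⁆ P =
      linearDerivation B (linearDerivation A P) - linearDerivation A (linearDerivation B P) := by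
  have : linearDerivation ⁅A, B⁆ = ⁅linearDerivation B, linearDerivation A⁆ := by
    refine derivation_ext fun i => ?_
    simp only [Derivation.commutator_apply, linearDerivation_X, map_sum, ← smul_eq_C_mul,
      Derivation.map_smul]
    simp only [Ring.lie_def, Matrix.sub_apply, Matrix.mul_apply, sub_smul, Finset.sum_sub_distrib,
      Finset.smul_sum, Finset.sum_smul, smul_smul]
    congr 1 <;> exact Finset.sum_comm
  rw [this, Derivation.commutator_apply]

/-- An eigenvector of the Euler derivation with nonzero constant term is constant. -/
theorem eq_C_of_linearDerivation_one [CharZero k] [DecidableEq σ] {q : MvPolynomial σ k} {c : k}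
    (hq : linearDerivation 1 q = C c * q) (h0 : constantCoeff q ≠ 0) : q = C (constantCoeff q) := by
  have hE : linearDerivation 1 q = ∑ i, X i * pderiv i q := by
    rw [linearDerivation_apply]
    refine Finset.sum_congr rfl fun i _ => ?_
    simp [Matrix.one_apply]
  have hcoeff (s : σ →₀ ℕ) : (s.degree : k) * coeff s q = c * coeff s q := by
    rw [← coeff_C_mul s c q, ← hq, hE]
    conv_rhs => rw [q.as_sum]
    simp_rw [map_sum, Finset.mul_sum]
    rw [Finset.sum_comm]
    simp_rw [(isHomogeneous_monomial _ rfl).sum_X_mul_pderiv, coeff_sum, coeff_smul, coeff_monomial]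
    simp +contextual
  have hc : c = 0 := by simpa [← constantCoeff_eq, h0] using hcoeff 0
  ext s
  by_cases hs : s = 0
  · simp [hs, constantCoeff_eq]
  · have := hcoeff s
    rw [hc, zero_mul, mul_eq_zero, Nat.cast_eq_zero, Finsupp.degree_eq_zero_iff] at this
    rw [this.resolve_left hs, coeff_C, if_neg (Ne.symm hs)]

end MvPolynomial

namespace Matrix

variable {R n l : Type*} [CommRing R] [Fintype n] [DecidableEq n] [Fintype l]
  [DecidableEq l]

theorem trace_adjugate_mul_mul (N : Matrix n n R) (U : Matrix n l R) (W : Matrix l n R) :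
    (N.adjugate * (U * W)).trace = ∑ i,
      ((N + U * (single i i 1 : Matrix l l R) * W).det - N.det) := by
  rw [← Matrix.mul_assoc, trace_mul_comm, ← Matrix.mul_assoc, trace]
  refine Finset.sum_congr rfl fun i _ => ?_
  have : U * (single i i 1 : Matrix l l R) * W = (U.submatrix id fun _ => i : Matrix n Unit R) *
      (W.submatrix (fun _ => i) id : Matrix Unit n R) := by
    ext a b
    rw [mul_apply, Finset.sum_eq_single i]
    · rw [mul_apply, Finset.sum_eq_single i]
      · simp [mul_apply]
      · intro j _ hj
        simp [hj.symm]
      · simp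
    · intro j _ hj
      simp [hj]
    · simp
  rw [this, det_add_mul_eq_det_add, add_sub_cancel_left]
  simp [mul_apply]

end Matrix

namespace Derivation

variable {k R n l : Type*} [CommRing k] [CommRing R] [Algebra k R] [Fintype n] [DecidableEq n]
  [Fintype l] [DecidableEq l] (δ : Derivation k R R)

theorem det_add_mul_mem_span {β : Matrix n n R} {A : Matrix n n k}
    (hβ : β.map δ = (A.map (algebraMap k R)).transpose * β + β * A.map (algebraMap k R))
    (U : Matrix n l k) (W : Matrix l n k) :
    δ (β + (U * W).map (algebraMap k R)).det ∈ Ideal.span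
      (Set.range fun P : Matrix n l k × Matrix l n k =>
        (β + (P.1 * P.2).map (algebraMap k R)).det) := by
  set F := fun P : Matrix n l k × Matrix l n k => (β + (P.1 * P.2).map (algebraMap k R)).det with hF
  have hmem (U : Matrix n l k) (W : Matrix l n k) :
      (β + (U * W).map (algebraMap k R)).det ∈ Ideal.span (Set.range F) :=
    Ideal.subset_span ⟨(U, W), rfl⟩
  set N := β + (U * W).map (algebraMap k R) with hN
  set A' := A.map (algebraMap k R) with hA'
  set U' := U.map (algebraMap k R) with hU'
  set W' := W.map (algebraMap k R) with hW'
  have hN' : N = β + U' * W' := by rw [hN, Matrix.map_mul]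
  have hδN : N.map δ = A'.transpose * N + N * A' - (A'.transpose * U') * W' - U' * (W' * A') := by
    have : N.map δ = β.map δ := by
      ext i j
      rw [hN]
      simp only [Matrix.map_apply, Matrix.add_apply, map_add, map_algebraMap, add_zero]
    rw [this, hβ, hN', Matrix.mul_add, Matrix.add_mul, Matrix.mul_assoc, Matrix.mul_assoc]
    abel
  have h1 : (N.adjugate * (A'.transpose * N)).trace = N.det * A'.transpose.trace := by
    rw [Matrix.trace_mul_comm, Matrix.mul_assoc, Matrix.mul_adjugate, Matrix.mul_smul,
      Matrix.mul_one, Matrix.trace_smul, smul_eq_mul]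
  have h2 : (N.adjugate * (N * A')).trace = N.det * A'.trace := by
    rw [← Matrix.mul_assoc, Matrix.adjugate_mul, Matrix.smul_mul, Matrix.one_mul,
      Matrix.trace_smul, smul_eq_mul]
  rw [δ.map_det_eq_trace, hδN, Matrix.mul_sub, Matrix.mul_sub, Matrix.mul_add, Matrix.trace_sub,
    Matrix.trace_sub, Matrix.trace_add, h1, h2, Matrix.trace_adjugate_mul_mul,
    Matrix.trace_adjugate_mul_mul]
  refine sub_mem (sub_mem (add_mem (Ideal.mul_mem_right _ _ (hmem U W))
    (Ideal.mul_mem_right _ _ (hmem U W))) ?_) ?_ <;>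
  refine Ideal.sum_mem _ fun i _ => sub_mem ?_ (hmem U W)
  · have h : N + A'.transpose * U' * (Matrix.single i i 1 : Matrix l l R) * W' =
        β + ((U + A.transpose * U * (Matrix.single i i 1 : Matrix l l k)) * W).map
          (algebraMap k R) := by
      rw [hN, Matrix.add_mul, Matrix.map_add _ (map_add _), add_assoc]
      simp [Matrix.map_mul, hA', hU', hW', Matrix.transpose_map]
    exact h ▸ hmem _ _
  · have h : N + U' * (Matrix.single i i 1 : Matrix l l R) * (W' * A') =
        β + (U * (W + (Matrix.single i i 1 : Matrix l l k) * (W * A))).map (algebraMap k R) := by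
      rw [hN, Matrix.mul_add, Matrix.map_add _ (map_add _), add_assoc]
      simp [Matrix.map_mul, hA', hU', hW', Matrix.mul_assoc]
    exact h ▸ hmem _ _

omit [DecidableEq n] in
theorem det_mul_mem_span {J : Matrix l n R} {A : Matrix n n k}
    (hJ : J.map δ = J * A.map (algebraMap k R)) (U : Matrix n l k) :
    δ (J * U.map (algebraMap k R)).det ∈ Ideal.span
      (Set.range fun U : Matrix n l k => (J * U.map (algebraMap k R)).det) := by
  rw [δ.map_det]
  refine Ideal.sum_mem _ fun j _ => Ideal.subset_span ⟨U.updateCol j fun i => (A * U) i j, ?_⟩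
  have hδ : (J * U.map (algebraMap k R)).map δ = J * (A * U).map (algebraMap k R) := by
    rw [Matrix.map_mul (f := algebraMap k R), ← Matrix.mul_assoc, ← hJ]
    refine Matrix.ext fun a b => ?_
    simp [Matrix.mul_apply, mul_comm]
  refine congrArg Matrix.det (Matrix.ext fun a b => ?_)
  rw [Matrix.updateCol_apply]
  split_ifs with h
  · have := congrFun (congrFun hδ a) b
    rw [Matrix.map_apply] at this
    subst h
    rw [this]
    simp [Matrix.mul_apply]
  · simp [Matrix.mul_apply, h]

end Derivation

namespace Matrix

variable {k n l : Type*} [Field k] [Fintype n] [DecidableEq n] [Fintype l]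

theorem exists_det_add_mul_ne_zero {T : Matrix n n k}
    (hT : finrank k (LinearMap.ker T.mulVecLin) ≤ Fintype.card l) :
    ∃ (U : Matrix n l k) (W : Matrix l n k), (T + U * W).det ≠ 0 := by
  classical
  obtain ⟨C, hC⟩ := Submodule.exists_isCompl (LinearMap.range T.mulVecLin)
  have hCd : finrank k (LinearMap.ker T.mulVecLin) = finrank k C := by
    have h1 := Submodule.finrank_add_eq_of_isCompl hC
    have h2 := T.mulVecLin.finrank_range_add_finrank_ker
    rw [finrank_fintype_fun_eq_card] at h2
    rw [finrank_fintype_fun_eq_card] at h1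
    lia
  let u : LinearMap.ker T.mulVecLin ≃ₗ[k] C := LinearEquiv.ofFinrankEq _ _ hCd
  obtain ⟨i⟩ : Nonempty (Fin (finrank k (LinearMap.ker T.mulVecLin)) ↪ l) :=
    Function.Embedding.nonempty_of_card_le (by rwa [Fintype.card_fin])
  let B := finBasis k (LinearMap.ker T.mulVecLin)
  obtain ⟨w, hw⟩ : ∃ w : LinearMap.ker T.mulVecLin →ₗ[k] (l → k), Function.Injective w :=
    ⟨B.constr ℕ (Pi.basisFun k l ∘ i), B.injective_constr_of_linearIndependent
      ((Pi.basisFun k l).linearIndependent.comp _ i.injective)⟩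
  obtain ⟨g, hg⟩ := w.exists_leftInverse_of_injective (LinearMap.ker_eq_bot.mpr hw)
  obtain ⟨w', hw'⟩ := LinearMap.exists_extend w
  refine ⟨LinearMap.toMatrix' (C.subtype ∘ₗ u.toLinearMap ∘ₗ g), LinearMap.toMatrix' w', ?_⟩
  rw [← LinearMap.toMatrix'_comp, Ne, ← exists_mulVec_eq_zero_iff]
  rintro ⟨x, hx0, hx⟩
  rw [add_mulVec, LinearMap.toMatrix'_mulVec] at hx
  have hmem : T *ᵥ x ∈ C := by
    rw [eq_neg_of_add_eq_zero_left hx]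
    exact C.neg_mem (Subtype.mem _)
  have hTx : T *ᵥ x = 0 := by
    have := hC.disjoint.le_bot (⟨⟨x, rfl⟩, hmem⟩ : T *ᵥ x ∈ LinearMap.range T.mulVecLin ⊓ C)
    simpa using this
  rw [hTx, zero_add] at hx
  have hgx : g (w' x) = 0 := by simpa using hx
  have hwx : w' x = w ⟨x, hTx⟩ := LinearMap.congr_fun hw' ⟨x, hTx⟩
  rw [hwx] at hgx
  exact hx0 (congrArg Subtype.val ((LinearMap.congr_fun hg ⟨x, hTx⟩).symm.trans hgx))

theorem finrank_ker_le_of_det_add_mul_ne_zero {T : Matrix n n k} {U : Matrix n l k}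
    {W : Matrix l n k} (h : (T + U * W).det ≠ 0) :
    finrank k (LinearMap.ker T.mulVecLin) ≤ Fintype.card l := by
  rw [← finrank_fintype_fun_eq_card k]
  refine LinearMap.finrank_le_finrank_of_injective
    (f := W.mulVecLin ∘ₗ (LinearMap.ker T.mulVecLin).subtype) ?_
  rw [injective_iff_map_eq_zero]
  rintro ⟨x, hx⟩ hW
  by_contra hx0
  refine h (exists_mulVec_eq_zero_iff.mp ⟨x, fun h0 => hx0 (Subtype.ext h0), ?_⟩)
  simp only [LinearMap.comp_apply, Submodule.subtype_apply, mulVecLin_apply] at hW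
  rw [LinearMap.mem_ker, mulVecLin_apply] at hx
  rw [add_mulVec, ← mulVec_mulVec, hx, hW, mulVec_zero, add_zero]

theorem linearIndependent_rows_iff_exists_det_mul_ne_zero [DecidableEq l] {J : Matrix l n k} :
    LinearIndependent k J.row ↔ ∃ U : Matrix n l k, (J * U).det ≠ 0 := by
  constructor
  · intro h
    obtain ⟨g, hg⟩ := J.vecMulLinear.exists_leftInverse_of_injective
      (LinearMap.ker_eq_bot.mpr (vecMul_injective_iff.mpr h))
    refine ⟨LinearMap.toMatrixRight' g, ?_⟩
    have : J * LinearMap.toMatrixRight' g = 1 := by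
      have hJ : J = LinearMap.toMatrixRight' J.vecMulLinear := by
        refine (LinearEquiv.apply_symm_apply LinearMap.toMatrixRight' J).symm.trans ?_
        rfl
      rw [hJ, ← LinearMap.toMatrixRight'_comp, hg, LinearMap.toMatrixRight'_id]
    rw [this, det_one]
    exact one_ne_zero
  · rintro ⟨U, hU⟩
    rw [← vecMul_injective_iff]
    rw [← isUnit_iff_ne_zero, ← isUnit_iff_isUnit_det] at hU
    have := vecMul_injective_of_isUnit hU
    refine Function.Injective.of_comp (f := fun v => v ᵥ* U) ?_
    simpa [Function.comp_def, vecMul_vecMul] using this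

theorem exists_det_submatrix_ne_zero [DecidableEq l] {J : Matrix l n k}
    (hJ : LinearIndependent k J.row) : ∃ c : l → n, (J.submatrix id c).det ≠ 0 := by
  obtain ⟨U, hU⟩ := linearIndependent_rows_iff_exists_det_mul_ne_zero.mp hJ
  by_contra! h
  refine hU ?_
  have : (detRowAlternating (R := k) (n := l)).compLinearMap J.mulVecLin = 0 := by
    refine Basis.ext_alternating (Pi.basisFun k n) fun c _ => ?_
    rw [AlternatingMap.compLinearMap_apply, AlternatingMap.zero_apply, ← h c, ← det_transpose]
    change det _ = det _
    congr 1
    ext i j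
    simp
  have := DFunLike.congr_fun this U.col
  rw [AlternatingMap.compLinearMap_apply, AlternatingMap.zero_apply] at this
  rw [← det_transpose, ← this]
  change det _ = det _
  congr 1

end Matrix

namespace MvPolynomial

section

variable {k σ : Type*} [Field k]

theorem totalDegree_pderiv_le (s : σ) (P : MvPolynomial σ k) :
    (pderiv s P).totalDegree ≤ P.totalDegree - 1 := by
  conv_lhs => rw [← sum_homogeneousComponent P, map_sum]
  refine totalDegree_finsetSum_le fun i hi => ?_
  have := (homogeneousComponent_isHomogeneous i P).pderiv (i := s) |>.totalDegree_le
  rw [Finset.mem_range] at hi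
  lia

theorem eq_C_of_pderiv_eq_zero [CharZero k] [Fintype σ] {P : MvPolynomial σ k}
    (hP : ∀ s, pderiv s P = 0) : P = C (constantCoeff P) := by
  classical
  have := eq_C_of_linearDerivation_one (q := P + C (1 - constantCoeff P)) (c := 0)
    (by simp [linearDerivation_apply, hP]) (by simp)
  simp only [map_add, constantCoeff_C, add_sub_cancel] at this
  rw [map_sub] at this
  linear_combination this

theorem not_forall_dvd_pderiv [CharZero k] [Fintype σ] {q : MvPolynomial σ k} (hq : Prime q) :
    ¬ ∀ s, q ∣ pderiv s q := by
  intro h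
  have hpd : ∀ s, pderiv s q = 0 := by
    intro s
    by_contra h0
    have h1 := totalDegree_le_of_dvd_of_isDomain (h s) h0
    have h2 := totalDegree_pderiv_le s q
    obtain ⟨g, hg⟩ := h s
    have : q.totalDegree = 0 := by lia
    rw [totalDegree_eq_zero_iff_eq_C] at this
    rw [this, pderiv_C] at h0
    exact h0 rfl
  have := eq_C_of_pderiv_eq_zero hpd
  refine hq.not_isUnit ?_
  rw [this]
  refine (isUnit_iff_ne_zero.mpr ?_).map C
  intro h0
  rw [h0, map_zero] at this
  exact hq.ne_zero this

theorem pderiv_aeval {ι : Type*} [Fintype ι] (f : ι → MvPolynomial σ k) (A : MvPolynomial ι k)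
    (s : σ) : pderiv s (aeval f A) = ∑ i, aeval f (pderiv i A) * pderiv s (f i) := by
  classical
  induction A using MvPolynomial.induction_on with
  | C a => simp
  | add P Q hP hQ => simp only [map_add, hP, hQ, add_mul, Finset.sum_add_distrib]
  | mul_X P i hP =>
    simp only [map_mul, aeval_X, Derivation.leibniz, hP, smul_eq_mul, map_add, pderiv_X, add_mul,
      Finset.sum_add_distrib, Finset.mul_sum]
    congr 1
    · rw [Finset.sum_eq_single i] <;> simp +contextual
    · exact Finset.sum_congr rfl fun j _ => by ring

/-- The Jacobian matrix of a family of polynomials. -/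
noncomputable def jacobian {ι : Type*} (p : ι → MvPolynomial σ k) :
    Matrix ι σ (MvPolynomial σ k) :=
  Matrix.of fun i s => pderiv s (p i)

theorem jacobian_apply {ι : Type*} (p : ι → MvPolynomial σ k) (i : ι) (s : σ) :
    jacobian p i s = pderiv s (p i) :=
  rfl

end

variable {k σ ι : Type*} [Field k] [CharZero k] [Fintype σ] [Fintype ι] [DecidableEq ι]
  [DecidableEq σ]

omit [CharZero k] in
theorem exists_map_det_jacobian_ne_zero {K : Type*} [Field K] {p : ι → MvPolynomial σ k}
    (π : MvPolynomial σ k →+* K) (h : LinearIndependent K ((jacobian p).map π).row) :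
    ∃ U : Matrix σ ι k, π (jacobian p * U.map (algebraMap k (MvPolynomial σ k))).det ≠ 0 := by
  obtain ⟨c, hc⟩ := Matrix.exists_det_submatrix_ne_zero h
  refine ⟨(1 : Matrix σ σ k).submatrix id c, ?_⟩
  convert hc
  rw [RingHom.map_det]
  congr 1
  ext i j
  simp [Matrix.mul_apply, Matrix.one_apply, jacobian_apply]

theorem exists_det_jacobian_ne_zero {p : ι → MvPolynomial σ k} (hp : AlgebraicIndependent k p) :
    ∃ U : Matrix σ ι k, (jacobian p * U.map (algebraMap k (MvPolynomial σ k))).det ≠ 0 := by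
  let K := FractionRing (MvPolynomial σ k)
  have hinj := IsFractionRing.injective (MvPolynomial σ k) K
  obtain ⟨U, hU⟩ := exists_map_det_jacobian_ne_zero (p := p) (algebraMap (MvPolynomial σ k) K) (by
    rw [Fintype.linearIndependent_iff]
    intro c hc
    refine fun i => congrFun (eq_zero_of_sum_smul_pderiv_eq (k := k) (K := K) (q := 0) (f := p)
      (map_zero _) ?_ c 0 fun s => ?_) i
    · exact hp.map' (f := IsScalarTower.toAlgHom k (MvPolynomial σ k) K) hinj
    · simpa [jacobian_apply] using congrFun hc s)
  exact ⟨U, fun h => hU (by rw [h, map_zero])⟩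

/-- The maximal minors of the Jacobian matrix of algebraically independent polynomials `p` have no
common prime factor of the form `q = A(p)`, provided that the cofactors of `q` in `k[p]` are in
`k[p]`. -/
theorem exists_not_dvd_det_pderiv {p : ι → MvPolynomial σ k} (hp : AlgebraicIndependent k p)
    {q : MvPolynomial σ k} (hq : Prime q) {A : MvPolynomial ι k} (hA : aeval p A = q)
    (hdiv : ∀ (g : MvPolynomial σ k) (B : MvPolynomial ι k), q * g = aeval p B →
      ∃ A' : MvPolynomial ι k, aeval p A' = g) :
    ∃ U : Matrix σ ι k,
      ¬ q ∣ (jacobian p * U.map (algebraMap k (MvPolynomial σ k))).det := by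
  let I := Ideal.span {q}
  have hI : I.IsPrime := (Ideal.span_singleton_prime hq.ne_zero).mpr hq
  let K := FractionRing (MvPolynomial σ k ⧸ I)
  have hπ : ∀ P, algebraMap (MvPolynomial σ k) K P = 0 ↔ q ∣ P := by
    intro P
    rw [IsScalarTower.algebraMap_apply (MvPolynomial σ k) (MvPolynomial σ k ⧸ I) K,
      FaithfulSMul.algebraMap_eq_zero_iff, Ideal.Quotient.algebraMap_eq,
      Ideal.Quotient.eq_zero_iff_mem, Ideal.mem_span_singleton]
  set π := algebraMap (MvPolynomial σ k) K with hπdef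
  by_contra! h
  have hrow : ¬ LinearIndependent K ((jacobian p).map π).row := by
    intro hli
    obtain ⟨U, hU⟩ := exists_map_det_jacobian_ne_zero π hli
    exact hU ((hπ _).mpr (h U))
  obtain ⟨c, hc, i₀, hi₀⟩ := Fintype.not_linearIndependent_iff.mp hrow
  replace hc : ∀ s, ∑ i, c i * π (pderiv s (p i)) = 0 := fun s => by
    simpa [jacobian_apply] using congrFun hc s
  have hAdvd : ∀ B, q ∣ aeval p B → A ∣ B := by
    rintro B ⟨g, hg⟩
    obtain ⟨A', rfl⟩ := hdiv g B hg.symm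
    refine ⟨A', hp ?_⟩
    rw [hg, ← hA, map_mul]
  obtain ⟨i, hi⟩ : ∃ i, pderiv i A ≠ 0 := by
    by_contra! hA0
    rw [eq_C_of_pderiv_eq_zero hA0, aeval_C] at hA
    refine hq.not_isUnit (hA ▸ (isUnit_iff_ne_zero.mpr ?_).map _)
    intro h0
    rw [h0, map_zero] at hA
    exact hq.ne_zero hA.symm
  have hvars (B : MvPolynomial ι k) : B.degreeOf i = 0 ↔ i ∉ B.vars := by
    rw [degreeOf_def, Multiset.count_eq_zero, vars_def, Multiset.mem_toFinset]
  have hAi : A.degreeOf i ≠ 0 := fun h0 =>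
    hi (pderiv_eq_zero_of_notMem_vars ((hvars A).mp h0))
  have hA0 : A ≠ 0 := by rintro rfl; simp at hi
  have hind : AlgebraicIndependent k fun j : {j // j ≠ i} => π (p j) := by
    rw [algebraicIndependent_iff]
    intro B hB
    have hB' : A ∣ rename Subtype.val B := by
      refine hAdvd _ ((hπ _).mp ?_)
      rw [aeval_rename, ← hB, hπdef, ← aeval_algebraMap_apply]
      rfl
    by_contra hB0
    obtain ⟨A', hA'⟩ := hB'
    have hB1 : rename Subtype.val B ≠ 0 := by
      rwa [Ne, rename_eq_zero_iff_of_injective _ Subtype.val_injective]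
    have hA'0 : A' ≠ 0 := by rintro rfl; exact hB1 (by rw [hA', mul_zero])
    have h1 := congrArg (degreeOf i) hA'
    rw [degreeOf_mul_eq hA0 hA'0] at h1
    have h2 : degreeOf i (rename Subtype.val B) = 0 := by
      refine (hvars _).mpr fun hmem => ?_
      obtain ⟨j, -, hj⟩ := Finset.mem_image.mp (vars_rename _ _ hmem)
      exact j.2 hj
    lia
  have key := fun (c : {j // j ≠ i} → K) l => eq_zero_of_sum_smul_pderiv_eq (q := q)
    ((hπ q).mpr dvd_rfl) hind c l
  have hsum (d : ι → K) (hd : d i = 0) (s : σ) :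
      ∑ j : {j // j ≠ i}, d j * π (pderiv s (p j)) = ∑ j, d j * π (pderiv s (p j)) := by
    rw [← Fintype.sum_subtype_add_sum_subtype (· ≠ i), left_eq_add]
    refine Finset.sum_eq_zero fun j _ => ?_
    rw [not_not.mp j.2, hd, zero_mul]
  by_cases hci : c i = 0
  · have := key (fun j => c j) 0 fun s => by rw [hsum c hci, hc, zero_mul]
    refine hi₀ ?_
    by_cases h : i₀ = i
    · rw [h, hci]
    · exact congrFun this ⟨i₀, h⟩
  · let a : ι → K := fun j => π (aeval p (pderiv j A))
    let d : ι → K := fun j => a j - a i / c i * c j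
    have hdi : d i = 0 := by simp [d, hci]
    have hds : ∀ s, ∑ j, d j * π (pderiv s (p j)) = π (pderiv s q) := by
      intro s
      simp only [d, sub_mul, mul_assoc, Finset.sum_sub_distrib, ← Finset.mul_sum, hc, mul_zero,
        sub_zero]
      rw [← hA, pderiv_aeval, map_sum]
      simp [a]
    have := key (fun j => d j) 1 fun s => by rw [hsum d hdi, hds, one_mul]
    refine not_forall_dvd_pderiv hq fun s => ?_
    rw [← hπ, ← hds, ← hsum d hdi]
    exact Finset.sum_eq_zero fun j _ => by rw [congrFun this j]; simp

end MvPolynomial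

/-- If `β * Pᵀ = P * β = 0`, then `det (β + U W)` and `det (P U) * det (P Wᵀ)` are proportional as
functions of constant matrices `U`, `W`. When no prime divides all members of either family, they
agree up to a constant. -/
theorem MvPolynomial.exists_det_add_mul_eq {k σ ι : Type*} [Field k] [Fintype σ] [Fintype ι]
    [DecidableEq σ] [DecidableEq ι] {β : Matrix σ σ (MvPolynomial σ k)}
    {P : Matrix ι σ (MvPolynomial σ k)} (hPβ : P * β = 0) (hβP : β * P.transpose = 0)
    {D : Matrix σ ι k → Matrix ι σ k → MvPolynomial σ k} {ω : Matrix σ ι k → MvPolynomial σ k}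
    (hD : ∀ U W, D U W = (β + (U * W).map (algebraMap k (MvPolynomial σ k))).det)
    (hω : ∀ U, ω U = (P * U.map (algebraMap k (MvPolynomial σ k))).det)
    {U₀ : Matrix σ ι k} (hD₀ : D U₀ U₀.transpose ≠ 0) (hω₁ : ∃ U, ω U ≠ 0)
    (hDq : ∀ q, Prime q → q ∣ D U₀ U₀.transpose → ∃ U W, ¬ q ∣ D U W)
    (hωq : ∀ q, Prime q → q ∣ ω U₀ → ∃ U, ¬ q ∣ ω U) :
    ∃ c : k, c ≠ 0 ∧ ∀ U W, D U W = C c * (ω U * ω W.transpose) := by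
  have hωt (W : Matrix ι σ k) : ω W.transpose =
      (W.map (algebraMap k (MvPolynomial σ k)) * P.transpose).det := by
    rw [hω, ← Matrix.det_transpose, Matrix.transpose_mul, Matrix.transpose_map,
      Matrix.transpose_transpose]
  have hid (U U' : Matrix σ ι k) (W W' : Matrix ι σ k) :
      D U' W' * (ω U * ω W.transpose) = D U W * (ω U' * ω W'.transpose) := by
    have h1 : D U' W' * ω U = D U W' * ω U' := by
      simp only [hD, hω, Matrix.map_mul]
      exact Matrix.det_add_mul_mul_det_mul' hPβ _ _ _
    have h2 : D U W' * ω W.transpose = D U W * ω W'.transpose := by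
      simp only [hD, hωt, Matrix.map_mul]
      exact Matrix.det_add_mul_mul_det_mul hβP _ _ _
    linear_combination ω W.transpose * h1 + ω U' * h2
  have h₀ (U : Matrix σ ι k) (W : Matrix ι σ k) :
      D U W * (ω U₀ * ω U₀) = D U₀ U₀.transpose * (ω U * ω W.transpose) := by
    simpa only [Matrix.transpose_transpose] using hid U₀ U U₀.transpose W
  have hω₀ : ω U₀ ≠ 0 := by
    obtain ⟨U, hU⟩ := hω₁
    have := h₀ U U.transpose
    rw [Matrix.transpose_transpose] at this
    intro h
    rw [h, mul_zero, mul_zero] at this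
    exact mul_ne_zero hD₀ (mul_ne_zero hU hU) this.symm
  have h1 : D U₀ U₀.transpose ∣ ω U₀ * ω U₀ := by
    refine UniqueFactorizationMonoid.dvd_of_forall_prime hD₀ fun q hq hqD => ?_
    obtain ⟨U, W, hUW⟩ := hDq q hq hqD
    exact ⟨D U W, hUW, ω U * ω W.transpose, by rw [mul_comm, h₀]⟩
  have h2 : ω U₀ * ω U₀ ∣ D U₀ U₀.transpose := by
    refine UniqueFactorizationMonoid.dvd_of_forall_prime (mul_ne_zero hω₀ hω₀) fun q hq hqω => ?_
    obtain ⟨U, hU⟩ := hωq q hq ((hq.dvd_or_dvd hqω).elim id id)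
    refine ⟨ω U * ω U, fun h => hU ((hq.dvd_or_dvd h).elim id id), D U U.transpose, ?_⟩
    rw [mul_comm (ω U₀ * ω U₀), h₀, Matrix.transpose_transpose]
  obtain ⟨u, hu⟩ := associated_of_dvd_dvd h2 h1
  obtain ⟨c, hc, hcu⟩ := MvPolynomial.isUnit_iff_eq_C_of_isReduced.mp u.isUnit
  refine ⟨c, hc.ne_zero, fun U W => mul_right_cancel₀ (mul_ne_zero hω₀ hω₀) ?_⟩
  rw [h₀, ← hu, hcu]
  ring

section PolynomialFunctions

variable {L : Type*} [LieRing L] [LieAlgebra ℂ L] {n : ℕ} (b : Basis (Fin n) ℂ L)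

/-- The value at `x` of a polynomial in the coordinates of a basis `b`. -/
noncomputable def evalAt (x : L) : MvPolynomial (Fin n) ℂ →+* ℂ :=
  MvPolynomial.eval (fun i => b.repr x i)

/-- The polynomial of a linear form, in the coordinates of a basis `b`. -/
noncomputable def linForm (g : L →ₗ[ℂ] ℂ) : MvPolynomial (Fin n) ℂ := ∑ i, C (g (b i)) * X i

/-- The derivation of the ring of polynomial functions given by the vector field `x ↦ ⁅z, x⁆`. -/
noncomputable def adDerivation (z : L) :
    Derivation ℂ (MvPolynomial (Fin n) ℂ) (MvPolynomial (Fin n) ℂ) :=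
  linearDerivation (LinearMap.toMatrix b b (LieAlgebra.ad ℂ L z))

variable {b}

@[simp]
theorem evalAt_C (x : L) (c : ℂ) : evalAt b x (C c) = c := eval_C c

@[simp]
theorem evalAt_X (x : L) (i : Fin n) : evalAt b x (X i) = b.repr x i := eval_X i

@[simp]
theorem evalAt_algebraMap (x : L) (c : ℂ) :
    evalAt b x (algebraMap ℂ (MvPolynomial (Fin n) ℂ) c) = c := eval_C c

theorem evalAt_ext {P Q : MvPolynomial (Fin n) ℂ} (h : ∀ x, evalAt b x P = evalAt b x Q) :
    P = Q := by
  refine MvPolynomial.funext fun x => ?_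
  have := h (b.equivFun.symm x)
  have hx : (fun i => b.repr (b.equivFun.symm x) i) = x :=
    b.equivFun.apply_symm_apply x
  rwa [evalAt, hx] at this

@[simp]
theorem evalAt_linForm (g : L →ₗ[ℂ] ℂ) (x : L) : evalAt b x (linForm b g) = g x := by
  conv_rhs => rw [← b.sum_repr x, map_sum]
  simp [linForm, -Basis.sum_repr, mul_comm]

theorem evalAt_dirDeriv (u x : L) (P : MvPolynomial (Fin n) ℂ) :
    evalAt b x (dirDeriv b u P) = ∑ i, b.repr u i * evalAt b x (pderiv i P) := by
  simp [dirDeriv]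

theorem evalAt_dirDeriv_basis (k : Fin n) (x : L) (P : MvPolynomial (Fin n) ℂ) :
    evalAt b x (dirDeriv b (b k) P) = evalAt b x (pderiv k P) := by
  rw [evalAt_dirDeriv, Finset.sum_eq_single k]
  · simp
  · intro i _ hi
    simp [hi.symm]
  · simp

theorem evalAt_dirDeriv_linForm (u x : L) (g : L →ₗ[ℂ] ℂ) :
    evalAt b x (dirDeriv b u (linForm b g)) = g u := by
  rw [evalAt_dirDeriv, ← evalAt_linForm (b := b) g u]
  simp [linForm, Pi.single_apply, mul_comm]

theorem evalAt_linearDerivation (f : L →ₗ[ℂ] L) (x : L) (P : MvPolynomial (Fin n) ℂ) :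
    evalAt b x (linearDerivation (LinearMap.toMatrix b b f) P) =
      evalAt b x (dirDeriv b (f x) P) := by
  rw [linearDerivation_apply, evalAt_dirDeriv, map_sum]
  refine Finset.sum_congr rfl fun i _ => ?_
  rw [map_mul, map_sum]
  congr 1
  simp only [map_mul, evalAt_C, evalAt_X]
  exact congrFun (LinearMap.toMatrix_mulVec_repr b b f x) i

theorem linearDerivation_linForm (f : L →ₗ[ℂ] L) (g : L →ₗ[ℂ] ℂ) :
    linearDerivation (LinearMap.toMatrix b b f) (linForm b g) = linForm b (g ∘ₗ f) :=
  evalAt_ext (b := b) fun x => by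
    rw [evalAt_linearDerivation, evalAt_dirDeriv_linForm, evalAt_linForm, LinearMap.comp_apply]

theorem evalAt_adDerivation (z x : L) (P : MvPolynomial (Fin n) ℂ) :
    evalAt b x (adDerivation b z P) = evalAt b x (dirDeriv b ⁅z, x⁆ P) :=
  evalAt_linearDerivation (LieAlgebra.ad ℂ L z) x P

theorem adDerivation_linForm (z : L) (g : L →ₗ[ℂ] ℂ) :
    adDerivation b z (linForm b g) = linForm b (g ∘ₗ (LieAlgebra.ad ℂ L z : L →ₗ[ℂ] L)) :=
  linearDerivation_linForm _ g

theorem isInvariantPoly_iff {P : MvPolynomial (Fin n) ℂ} :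
    IsInvariantPoly b P ↔ ∀ z, adDerivation b z P = 0 := by
  refine ⟨fun h z => evalAt_ext (b := b) fun x => ?_, fun h x z => ?_⟩
  · rw [evalAt_adDerivation, map_zero]
    exact h x z
  · change evalAt b x _ = 0
    rw [← evalAt_adDerivation, h, map_zero]

/-- The restriction of a polynomial function to the line through `y` in the direction `u`. -/
noncomputable def lineRestrict (b : Basis (Fin n) ℂ L) (y u : L) :
    MvPolynomial (Fin n) ℂ →ₐ[ℂ] Polynomial ℂ :=
  aeval fun i => Polynomial.C (b.repr y i) + Polynomial.C (b.repr u i) * Polynomial.X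

theorem eval_lineRestrict (y u : L) (s : ℂ) (P : MvPolynomial (Fin n) ℂ) :
    (lineRestrict b y u P).eval s = evalAt b (y + s • u) P := by
  have : (Polynomial.evalRingHom s).comp (lineRestrict b y u : _ →+* Polynomial ℂ) =
      evalAt b (y + s • u) := by
    refine MvPolynomial.ringHom_ext (fun c => ?_) fun i => ?_
    · simp [lineRestrict]
    · simp [lineRestrict, mul_comm s]
  exact congrArg (fun f => f P) this

theorem derivative_lineRestrict (y u : L) (P : MvPolynomial (Fin n) ℂ) :
    Polynomial.derivative (lineRestrict b y u P) = lineRestrict b y u (dirDeriv b u P) := by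
  induction P using MvPolynomial.induction_on with
  | C c => simp [dirDeriv, lineRestrict]
  | add P Q hP hQ =>
    have h : dirDeriv b u (P + Q) = dirDeriv b u P + dirDeriv b u Q := by
      simp [dirDeriv, mul_add, Finset.sum_add_distrib]
    rw [h, map_add, map_add, map_add, hP, hQ]
  | mul_X P i hP =>
    have h : dirDeriv b u (P * X i) = dirDeriv b u P * X i + C (b.repr u i) * P := by
      simp only [dirDeriv, Derivation.leibniz, smul_eq_mul, pderiv_X, mul_add,
        Finset.sum_add_distrib,
        Finset.sum_mul]
      rw [Finset.sum_eq_single i]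
      · simp only [Pi.single_eq_same, mul_one]
        rw [add_comm]
        congr 1
        exact Finset.sum_congr rfl fun _ _ => by ring
      · intro j _ hj
        simp [hj.symm]
      · simp
    rw [h, map_mul, map_add, Polynomial.derivative_mul, hP, map_mul, map_mul]
    congr 1
    simp [lineRestrict, mul_comm (aeval _ P)]

/-- Invariant polynomials do not vary in the directions of root vectors. -/
theorem IsInvariantPoly.derivative_lineRestrict_eq_zero {P : MvPolynomial (Fin n) ℂ}
    (hP : IsInvariantPoly b P) {h y u : L} {a : ℂ} (ha : a ≠ 0) (hy : ⁅h, y⁆ = 0)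
    (hu : ⁅h, u⁆ = a • u) : Polynomial.derivative (lineRestrict b y u P) = 0 := by
  have : Polynomial.X * Polynomial.derivative (lineRestrict b y u P) = 0 := by
    refine Polynomial.funext fun s => ?_
    have h1 := hP (y + s • u) h
    change evalAt b _ _ = 0 at h1
    rw [lie_add, hy, zero_add, lie_smul, hu, evalAt_dirDeriv] at h1
    rw [Polynomial.eval_mul, derivative_lineRestrict, eval_lineRestrict, evalAt_dirDeriv,
      Polynomial.eval_X, Polynomial.eval_zero]
    refine (mul_eq_zero.mp (?_ : a * _ = 0)).resolve_left ha
    rw [← h1, Finset.mul_sum, Finset.mul_sum]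
    refine Finset.sum_congr rfl fun i _ => ?_
    simp only [map_smul, Finsupp.smul_apply, smul_eq_mul]
    ring
  exact (mul_eq_zero.mp this).resolve_left Polynomial.X_ne_zero

theorem IsInvariantPoly.evalAt_dirDeriv_eq_zero {P : MvPolynomial (Fin n) ℂ}
    (hP : IsInvariantPoly b P) {h y u : L} {a : ℂ} (ha : a ≠ 0) (hy : ⁅h, y⁆ = 0)
    (hu : ⁅h, u⁆ = a • u) : evalAt b y (dirDeriv b u P) = 0 := by
  have := congrArg (Polynomial.eval 0) (hP.derivative_lineRestrict_eq_zero ha hy hu)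
  rwa [derivative_lineRestrict, eval_lineRestrict, zero_smul,
    add_zero, Polynomial.eval_zero] at this

theorem IsInvariantPoly.evalAt_add {P : MvPolynomial (Fin n) ℂ}
    (hP : IsInvariantPoly b P) {h y u : L} {a : ℂ} (ha : a ≠ 0) (hy : ⁅h, y⁆ = 0)
    (hu : ⁅h, u⁆ = a • u) : evalAt b (y + u) P = evalAt b y P := by
  have h1 := Polynomial.eq_C_of_natDegree_eq_zero
    (Polynomial.derivative_eq_zero.mp
      (hP.derivative_lineRestrict_eq_zero ha hy hu))
  have h2 := eval_lineRestrict (b := b) y u 1 P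
  have h3 := eval_lineRestrict (b := b) y u 0 P
  rw [h1, Polynomial.eval_C] at h2 h3
  rw [one_smul] at h2
  rw [zero_smul, add_zero] at h3
  exact h2.symm.trans h3

end PolynomialFunctions

section Killing

variable {L : Type*} [LieRing L] [LieAlgebra ℂ L] {n : ℕ} (b : Basis (Fin n) ℂ L)

theorem killingForm_comm (x y : L) : killingForm ℂ L x y = killingForm ℂ L y x :=
  LieModule.traceForm_comm ℂ L L x y

theorem killingForm_lie_left (x y z : L) :
    killingForm ℂ L ⁅x, y⁆ z = killingForm ℂ L x ⁅y, z⁆ :=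
  LieModule.traceForm_apply_lie_apply ℂ L L x y z

theorem killingForm_lie_right (x y z : L) :
    killingForm ℂ L x ⁅y, z⁆ = -killingForm ℂ L ⁅y, x⁆ z := by
  rw [← killingForm_lie_left, ← lie_skew x y, map_neg, LinearMap.neg_apply]

theorem eq_zero_of_killingForm_eq_zero [LieAlgebra.IsKilling ℂ L] {x : L}
    (h : ∀ y, killingForm ℂ L x y = 0) : x = 0 :=
  (LieAlgebra.IsKilling.killingForm_nondegenerate ℂ L).1 x h

theorem eq_zero_of_forall_lie_eq_zero [LieAlgebra.IsKilling ℂ L] {x : L}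
    (h : ∀ y : L, ⁅y, x⁆ = 0) : x = 0 := by
  refine eq_zero_of_killingForm_eq_zero fun y => ?_
  rw [killingForm_apply_apply]
  have : LieAlgebra.ad ℂ L x = 0 := by
    ext z
    rw [LieAlgebra.ad_apply, ← lie_skew, h, neg_zero, LinearMap.zero_apply]
  rw [this, LinearMap.zero_comp, map_zero]

/-- A linear form on a Killing Lie algebra that vanishes on brackets is zero. -/
theorem eq_zero_of_forall_apply_lie_eq_zero [FiniteDimensional ℂ L] [LieAlgebra.IsKilling ℂ L]
    {g : L →ₗ[ℂ] ℂ} (hg : ∀ x y : L, g ⁅x, y⁆ = 0) : g = 0 := by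
  let w := (LinearMap.BilinForm.toDual (killingForm ℂ L)
    (LieAlgebra.IsKilling.killingForm_nondegenerate ℂ L)).symm g
  have hw (x : L) : killingForm ℂ L w x = g x :=
    LinearMap.BilinForm.apply_toDual_symm_apply g x
  have hw0 : w = 0 := eq_zero_of_forall_lie_eq_zero fun y => by
    refine eq_zero_of_killingForm_eq_zero fun z => ?_
    rw [← neg_eq_zero, ← killingForm_lie_right, hw, hg]
  ext x
  rw [← hw, hw0, map_zero]

variable {b}

theorem toMatrix_ad_lie (z w : L) :
    LinearMap.toMatrix b b (LieAlgebra.ad ℂ L ⁅z, w⁆) =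
      ⁅LinearMap.toMatrix b b (LieAlgebra.ad ℂ L z),
        LinearMap.toMatrix b b (LieAlgebra.ad ℂ L w)⁆ := by
  have h : (LieAlgebra.ad ℂ L ⁅z, w⁆ : L →ₗ[ℂ] L) =
      LieAlgebra.ad ℂ L z ∘ₗ LieAlgebra.ad ℂ L w - LieAlgebra.ad ℂ L w ∘ₗ LieAlgebra.ad ℂ L z := by
    ext x
    exact lie_lie z w x
  rw [h, LieRing.of_associative_ring_bracket, map_sub, LinearMap.toMatrix_comp b b b,
    LinearMap.toMatrix_comp b b b]

theorem adDerivation_lie_eq_zero {z w : L} {c d : ℂ} {q : MvPolynomial (Fin n) ℂ}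
    (hz : adDerivation b z q = C c * q) (hw : adDerivation b w q = C d * q) :
    adDerivation b ⁅z, w⁆ q = 0 := by
  simp only [adDerivation] at *
  rw [toMatrix_ad_lie, linearDerivation_lie, hz, hw, ← smul_eq_C_mul, ← smul_eq_C_mul,
    Derivation.map_smul, Derivation.map_smul, hz, hw, ← smul_eq_C_mul, ← smul_eq_C_mul,
    smul_comm, sub_self]

theorem adDerivation_add_apply (z w : L) (q : MvPolynomial (Fin n) ℂ) :
    adDerivation b (z + w) q = adDerivation b z q + adDerivation b w q :=
  evalAt_ext (b := b) fun x => by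
    simp only [map_add, evalAt_adDerivation, add_lie, evalAt_dirDeriv, Finsupp.add_apply, add_mul,
      Finset.sum_add_distrib]

theorem adDerivation_smul_apply (a : ℂ) (z : L) (q : MvPolynomial (Fin n) ℂ) :
    adDerivation b (a • z) q = C a * adDerivation b z q :=
  evalAt_ext (b := b) fun x => by
    simp only [map_mul, evalAt_C, evalAt_adDerivation, smul_lie, evalAt_dirDeriv, map_smul,
      Finsupp.smul_apply, smul_eq_mul, mul_assoc, Finset.mul_sum]

theorem isInvariantPoly_of_dvd [FiniteDimensional ℂ L] [LieAlgebra.IsKilling ℂ L]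
    {q : MvPolynomial (Fin n) ℂ} (hq : q ≠ 0) (hdvd : ∀ z, q ∣ adDerivation b z q) :
    IsInvariantPoly b q := by
  choose c hc using fun z => exists_linearDerivation_eq_C_mul hq (hdvd z)
  change ∀ z, adDerivation b z q = _ at hc
  have hC {x y : ℂ} (h : C x * q = C y * q) : x = y := C_injective _ _ (mul_right_cancel₀ hq h)
  let g : L →ₗ[ℂ] ℂ :=
    { toFun := c
      map_add' := fun z w => hC (by rw [← hc, adDerivation_add_apply, hc, hc, map_add, add_mul])
      map_smul' := fun a z => hC (by
        rw [← hc, adDerivation_smul_apply, hc, RingHom.id_apply, smul_eq_mul, map_mul, mul_assoc]) }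
  have hg : g = 0 := eq_zero_of_forall_apply_lie_eq_zero fun x y => hC (by
    change C (c _) * q = _
    rw [← hc, adDerivation_lie_eq_zero (hc x) (hc y), map_zero, zero_mul])
  refine isInvariantPoly_iff.mpr fun z => ?_
  rw [hc, show c z = 0 from LinearMap.congr_fun hg z, map_zero, zero_mul]

theorem IsInvariantPoly.of_mul {q g : MvPolynomial (Fin n) ℂ} (hq0 : q ≠ 0)
    (hq : IsInvariantPoly b q) (h : IsInvariantPoly b (q * g)) : IsInvariantPoly b g := by
  rw [isInvariantPoly_iff] at *
  intro z
  have := h z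
  rw [Derivation.leibniz, hq, smul_zero, add_zero, smul_eq_mul] at this
  exact (mul_eq_zero.mp this).resolve_left hq0

theorem isInvariantPoly_of_mem_adjoin {s : Set (MvPolynomial (Fin n) ℂ)}
    (hs : ∀ P ∈ s, IsInvariantPoly b P) {P : MvPolynomial (Fin n) ℂ}
    (hP : P ∈ Algebra.adjoin ℂ s) : IsInvariantPoly b P := by
  rw [isInvariantPoly_iff]
  intro z
  induction hP using Algebra.adjoin_induction with
  | mem x hx => exact isInvariantPoly_iff.mp (hs x hx) z
  | algebraMap c => exact Derivation.map_algebraMap _ c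
  | add x y _ _ hx hy => rw [map_add, hx, hy, add_zero]
  | mul x y _ _ hx hy => rw [Derivation.leibniz, hx, hy, smul_zero, smul_zero, add_zero]

end Killing

section BracketMatrix

variable {L : Type*} [LieRing L] [LieAlgebra ℂ L] {n : ℕ} (b : Basis (Fin n) ℂ L)

/-- The matrix of the alternating form `(u, v) ↦ κ(⁅u, v⁆, x)`, as a polynomial in `x`. -/
noncomputable def bracketMatrix : Matrix (Fin n) (Fin n) (MvPolynomial (Fin n) ℂ) :=
  Matrix.of fun k l => linForm b (killingForm ℂ L ⁅b k, b l⁆)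

variable {b}

theorem evalAt_bracketMatrix (x : L) (k l : Fin n) :
    evalAt b x (bracketMatrix b k l) = killingForm ℂ L ⁅b k, b l⁆ x :=
  evalAt_linForm _ x

theorem bracketMatrix_transpose : (bracketMatrix b).transpose = -bracketMatrix b := by
  refine Matrix.ext fun k l => evalAt_ext (b := b) fun x => ?_
  rw [Matrix.transpose_apply, Matrix.neg_apply, map_neg, evalAt_bracketMatrix,
    evalAt_bracketMatrix, ← lie_skew, map_neg, LinearMap.neg_apply]

theorem sum_toMatrix_mul (f : L →ₗ[ℂ] L) (g : L →ₗ[ℂ] ℂ) (k : Fin n) :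
    ∑ j, LinearMap.toMatrix b b f j k * g (b j) = g (f (b k)) := by
  conv_rhs => rw [← b.sum_repr (f (b k)), map_sum]
  simp [LinearMap.toMatrix_apply, -Basis.sum_repr]

theorem bracketMatrix_map_adDerivation (z : L) :
    (bracketMatrix b).map (adDerivation b z) =
      ((-LinearMap.toMatrix b b (LieAlgebra.ad ℂ L z)).map
        (algebraMap ℂ (MvPolynomial (Fin n) ℂ))).transpose *
        bracketMatrix b + bracketMatrix b *
        (-LinearMap.toMatrix b b (LieAlgebra.ad ℂ L z)).map
          (algebraMap ℂ (MvPolynomial (Fin n) ℂ)) := by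
  refine Matrix.ext fun k l => evalAt_ext (b := b) fun x => ?_
  rw [Matrix.map_apply]
  conv_lhs => rw [bracketMatrix, Matrix.of_apply]
  rw [adDerivation_linForm, evalAt_linForm]
  simp only [Matrix.add_apply, Matrix.mul_apply, Matrix.transpose_apply, Matrix.map_apply, map_add,
    map_sum, map_mul, evalAt_bracketMatrix, evalAt_algebraMap, Matrix.neg_apply, neg_mul, mul_neg,
    Finset.sum_neg_distrib, LinearMap.comp_apply]
  have h1 := sum_toMatrix_mul (b := b) (LieAlgebra.ad ℂ L z)
    ((killingForm ℂ L).flip x ∘ₗ (LieAlgebra.ad ℂ L (b l) : L →ₗ[ℂ] L)) k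
  have h2 := sum_toMatrix_mul (b := b) (LieAlgebra.ad ℂ L z)
    ((killingForm ℂ L).flip x ∘ₗ (LieAlgebra.ad ℂ L (b k) : L →ₗ[ℂ] L)) l
  simp only [LinearMap.comp_apply, LinearMap.BilinForm.flip_apply, LieAlgebra.ad_apply] at h1 h2
  have h3 (j : Fin n) : killingForm ℂ L ⁅b j, b l⁆ x = -killingForm ℂ L ⁅b l, b j⁆ x := by
    rw [← lie_skew, map_neg, LinearMap.neg_apply]
  simp only [h3, mul_neg, Finset.sum_neg_distrib, neg_neg]
  simp only [mul_comm _ (LinearMap.toMatrix b b (LieAlgebra.ad ℂ L z) _ _)]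
  rw [h1, h2, LieAlgebra.ad_apply, killingForm_lie_right, leibniz_lie, map_add, LinearMap.add_apply,
    neg_add, ← lie_skew ⁅z, b k⁆ (b l), map_neg, LinearMap.neg_apply, neg_neg]

theorem bracketMatrix_map_linearDerivation_one :
    (bracketMatrix b).map (linearDerivation (1 : Matrix (Fin n) (Fin n) ℂ)) =
      ((Matrix.diagonal fun _ : Fin n => (2⁻¹ : ℂ)).map
        (algebraMap ℂ (MvPolynomial (Fin n) ℂ))).transpose *
        bracketMatrix b + bracketMatrix b *
        (Matrix.diagonal fun _ : Fin n => (2⁻¹ : ℂ)).map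
          (algebraMap ℂ (MvPolynomial (Fin n) ℂ)) := by
  refine Matrix.ext fun k l => evalAt_ext (b := b) fun x => ?_
  have h : linearDerivation (1 : Matrix (Fin n) (Fin n) ℂ) (bracketMatrix b k l) =
      bracketMatrix b k l := by
    rw [← LinearMap.toMatrix_id b]
    exact linearDerivation_linForm LinearMap.id _
  rw [Matrix.map_apply, h, Matrix.diagonal_map (map_zero _), Matrix.diagonal_transpose,
    Matrix.add_apply, Matrix.diagonal_mul, Matrix.mul_diagonal]
  simp only [map_add, map_mul, evalAt_algebraMap]
  ring

/-- The kernel of the specialised bracket matrix is the centralizer. -/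
theorem finrank_ker_bracketMatrix [LieAlgebra.IsKilling ℂ L] (x : L) :
    finrank ℂ (LinearMap.ker ((bracketMatrix b).map (evalAt b x)).mulVecLin) =
      finrank ℂ (LinearMap.ker (LieAlgebra.ad ℂ L x)) := by
  have h (u : L) (k : Fin n) :
      ((bracketMatrix b).map (evalAt b x)).mulVec (b.equivFun u) k =
        -killingForm ℂ L ⁅x, u⁆ (b k) := by
    have : killingForm ℂ L ⁅b k, u⁆ x = -killingForm ℂ L ⁅x, u⁆ (b k) := by
      rw [killingForm_lie_left, killingForm_comm, ← lie_skew, map_neg, LinearMap.neg_apply]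
    rw [← this]
    have hu : killingForm ℂ L ⁅b k, u⁆ x =
        ∑ l, killingForm ℂ L ⁅b k, b.repr u l • b l⁆ x := by
      rw [← LinearMap.sum_apply, ← map_sum, ← lie_sum, b.sum_repr u]
    rw [hu, Matrix.mulVec, dotProduct]
    refine Finset.sum_congr rfl fun l _ => ?_
    rw [Matrix.map_apply, evalAt_bracketMatrix, lie_smul, map_smul, LinearMap.smul_apply,
      smul_eq_mul, mul_comm]
    rfl
  have : LinearMap.ker (LieAlgebra.ad ℂ L x) =
      (LinearMap.ker ((bracketMatrix b).map (evalAt b x)).mulVecLin).comap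
        (b.equivFun : L →ₗ[ℂ] Fin n → ℂ) := by
    ext u
    rw [LinearMap.mem_ker, Submodule.mem_comap, LinearMap.mem_ker, LieAlgebra.ad_apply]
    refine ⟨fun hu => _root_.funext fun k => ?_,
      fun hu => eq_zero_of_killingForm_eq_zero fun y => ?_⟩
    · refine (h u k).trans ?_
      rw [hu, map_zero, LinearMap.zero_apply, neg_zero, Pi.zero_apply]
    · have h0 : killingForm ℂ L ⁅x, u⁆ = 0 := b.ext fun k => by
        rw [← neg_inj, ← h u k, LinearMap.zero_apply, neg_zero]
        exact congrFun hu k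
      rw [h0, LinearMap.zero_apply]
  rw [this]
  exact (LinearEquiv.finrank_eq (b.equivFun.ofSubmodule' _)).symm

end BracketMatrix

section GradMatrix

variable {L : Type*} [LieRing L] [LieAlgebra ℂ L] {n : ℕ} (b : Basis (Fin n) ℂ L) {ι : Type*}

/-- The coordinates of the gradients, with respect to the Killing form, of polynomials `p j`. -/
noncomputable def gradMatrix (p : ι → MvPolynomial (Fin n) ℂ) :
    Matrix ι (Fin n) (MvPolynomial (Fin n) ℂ) :=
  jacobian p * (LinearMap.BilinForm.toMatrix b (killingForm ℂ L))⁻¹.map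
      (algebraMap ℂ (MvPolynomial (Fin n) ℂ))

variable {b} {p : ι → MvPolynomial (Fin n) ℂ}

theorem sum_repr_mul (g : L →ₗ[ℂ] ℂ) (x : L) : ∑ k, b.repr x k * g (b k) = g x := by
  conv_rhs => rw [← b.sum_repr x, map_sum]
  simp [-Basis.sum_repr]

theorem isUnit_det_toMatrix_killingForm [FiniteDimensional ℂ L] [LieAlgebra.IsKilling ℂ L] :
    IsUnit (LinearMap.BilinForm.toMatrix b (killingForm ℂ L)).det := by
  rw [isUnit_iff_ne_zero, ← LinearMap.BilinForm.nondegenerate_iff_det_ne_zero]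
  exact LieAlgebra.IsKilling.killingForm_nondegenerate ℂ L

theorem evalAt_gradMatrix [FiniteDimensional ℂ L] [LieAlgebra.IsKilling ℂ L] {j : ι} {x g : L}
    (hg : ∀ y, killingForm ℂ L g y = evalAt b x (dirDeriv b y (p j))) (k : Fin n) :
    evalAt b x (gradMatrix b p j k) = b.repr g k := by
  set K := LinearMap.BilinForm.toMatrix b (killingForm ℂ L) with hK
  have h1 (l : Fin n) : evalAt b x (jacobian p j l) = Matrix.vecMul (b.repr g) K l := by
    rw [jacobian_apply, ← evalAt_dirDeriv_basis, ← hg, Matrix.vecMul, dotProduct]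
    simp only [hK, LinearMap.BilinForm.toMatrix_apply]
    exact (sum_repr_mul ((killingForm ℂ L).flip (b l)) g).symm
  have h2 : Matrix.vecMul (Matrix.vecMul (b.repr g) K) K⁻¹ = b.repr g := by
    rw [Matrix.vecMul_vecMul, Matrix.mul_nonsing_inv _ isUnit_det_toMatrix_killingForm,
      Matrix.vecMul_one]
  rw [← h2, gradMatrix, Matrix.mul_apply, map_sum]
  refine Finset.sum_congr rfl fun l _ => ?_
  rw [map_mul, h1, Matrix.map_apply, evalAt_algebraMap]

theorem gradMatrix_mul_bracketMatrix [FiniteDimensional ℂ L] [LieAlgebra.IsKilling ℂ L]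
    (hp : ∀ j, IsInvariantPoly b (p j)) {grad : ι → L → L}
    (hgrad : ∀ j x y, killingForm ℂ L (grad j x) y = evalAt b x (dirDeriv b y (p j))) :
    gradMatrix b p * bracketMatrix b = 0 := by
  refine Matrix.ext fun j l => evalAt_ext (b := b) fun x => ?_
  rw [Matrix.mul_apply, map_sum, Matrix.zero_apply, map_zero]
  simp only [map_mul, evalAt_gradMatrix (hgrad j x), evalAt_bracketMatrix]
  have h := sum_repr_mul (b := b) ((killingForm ℂ L).flip x ∘ₗ
    (LieAlgebra.ad ℂ L (b l) : L →ₗ[ℂ] L)) (grad j x)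
  simp only [LinearMap.comp_apply, LinearMap.BilinForm.flip_apply, LieAlgebra.ad_apply] at h
  have h3 (k : Fin n) : killingForm ℂ L ⁅b k, b l⁆ x = -killingForm ℂ L ⁅b l, b k⁆ x := by
    rw [← lie_skew, map_neg, LinearMap.neg_apply]
  simp only [h3, mul_neg, Finset.sum_neg_distrib]
  rw [h, ← killingForm_lie_right, hgrad]
  exact hp j x (b l)

theorem bracketMatrix_mul_transpose_gradMatrix [FiniteDimensional ℂ L] [LieAlgebra.IsKilling ℂ L]
    (hp : ∀ j, IsInvariantPoly b (p j)) {grad : ι → L → L}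
    (hgrad : ∀ j x y, killingForm ℂ L (grad j x) y = evalAt b x (dirDeriv b y (p j))) :
    bracketMatrix b * (gradMatrix b p).transpose = 0 := by
  rw [← Matrix.transpose_inj, Matrix.transpose_mul, Matrix.transpose_transpose,
    bracketMatrix_transpose, Matrix.mul_neg, gradMatrix_mul_bracketMatrix hp hgrad, neg_zero,
    Matrix.transpose_zero]

theorem pderiv_linearDerivation (A : Matrix (Fin n) (Fin n) ℂ) (P : MvPolynomial (Fin n) ℂ)
    (s : Fin n) : pderiv s (linearDerivation A P) =
      linearDerivation A (pderiv s P) + ∑ i, pderiv i P * C (A i s) := by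
  have h : ⁅pderiv (R := ℂ) s, linearDerivation A⁆ =
      ∑ i, (C (A i s) : MvPolynomial (Fin n) ℂ) • pderiv (R := ℂ) i := by
    refine derivation_ext fun i => ?_
    rw [Derivation.commutator_apply, Derivation.sum_apply', linearDerivation_X, pderiv_X]
    simp only [Derivation.smul_apply, pderiv_X, map_sum, Derivation.leibniz, smul_eq_mul, pderiv_C,
      mul_zero, add_zero, Pi.single_apply]
    rw [apply_ite (linearDerivation A), Derivation.map_one_eq_zero, map_zero]
    simp
  have := congrArg (fun δ : Derivation ℂ (MvPolynomial (Fin n) ℂ) (MvPolynomial (Fin n) ℂ) => δ P) h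
  simp only [Derivation.commutator_apply, Derivation.sum_apply', Derivation.smul_apply,
    smul_eq_mul] at this
  rw [sub_eq_iff_eq_add'.mp this]
  simp only [mul_comm]

theorem gradMatrix_map_adDerivation [FiniteDimensional ℂ L] [LieAlgebra.IsKilling ℂ L]
    (hp : ∀ j, IsInvariantPoly b (p j)) (z : L) :
    ∃ A : Matrix (Fin n) (Fin n) ℂ,
      (gradMatrix b p).map (adDerivation b z) = gradMatrix b p * A.map
        (algebraMap ℂ (MvPolynomial (Fin n) ℂ)) := by
  set K := LinearMap.BilinForm.toMatrix b (killingForm ℂ L) with hK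
  set Z := LinearMap.toMatrix b b (LieAlgebra.ad ℂ L z) with hZ
  have hJ : (jacobian p).map (adDerivation b z) = jacobian p * (-Z).map
      (algebraMap ℂ (MvPolynomial (Fin n) ℂ)) := by
    refine Matrix.ext fun j s => ?_
    have h := pderiv_linearDerivation Z (p j) s
    rw [show linearDerivation Z (p j) = 0 from isInvariantPoly_iff.mp (hp j) z, map_zero] at h
    rw [Matrix.map_apply, jacobian_apply, Matrix.mul_apply]
    simp only [Matrix.map_apply, Matrix.neg_apply, map_neg, mul_neg, Finset.sum_neg_distrib]
    exact eq_neg_of_add_eq_zero_left h.symm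
  have hS : (gradMatrix b p).map (adDerivation b z) =
      (jacobian p).map (adDerivation b z) * K⁻¹.map (algebraMap ℂ (MvPolynomial (Fin n) ℂ)) := by
    refine Matrix.ext fun j s => ?_
    simp [gradMatrix, Matrix.mul_apply, mul_comm, ← hK]
  refine ⟨K * (-Z) * K⁻¹, ?_⟩
  rw [hS, hJ, gradMatrix, Matrix.mul_assoc, Matrix.mul_assoc, ← Matrix.map_mul, ← Matrix.map_mul,
    ← Matrix.mul_assoc, ← Matrix.mul_assoc, Matrix.nonsing_inv_mul _
      isUnit_det_toMatrix_killingForm,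
    Matrix.one_mul]

theorem gradMatrix_mul_toMatrix_mul [FiniteDimensional ℂ L] [LieAlgebra.IsKilling ℂ L]
    (U : Matrix (Fin n) ι ℂ) :
    gradMatrix b p * (LinearMap.BilinForm.toMatrix b (killingForm ℂ L) * U).map
      (algebraMap ℂ (MvPolynomial (Fin n) ℂ)) =
      jacobian p * U.map (algebraMap ℂ (MvPolynomial (Fin n) ℂ)) := by
  rw [gradMatrix, Matrix.mul_assoc, ← Matrix.map_mul, ← Matrix.mul_assoc,
    Matrix.nonsing_inv_mul _ isUnit_det_toMatrix_killingForm, Matrix.one_mul]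

variable [Fintype ι] [DecidableEq ι]

theorem exists_det_gradMatrix_mul_ne_zero [FiniteDimensional ℂ L] [LieAlgebra.IsKilling ℂ L]
    (hindep : AlgebraicIndependent ℂ p) :
    ∃ U : Matrix (Fin n) ι ℂ,
      (gradMatrix b p * U.map (algebraMap ℂ (MvPolynomial (Fin n) ℂ))).det ≠ 0 := by
  obtain ⟨U, hU⟩ := exists_det_jacobian_ne_zero hindep
  exact ⟨_, by rwa [gradMatrix_mul_toMatrix_mul]⟩

/-- The maximal minors of the matrix of gradients have no common prime factor. -/
theorem exists_not_dvd_det_gradMatrix_mul [FiniteDimensional ℂ L] [LieAlgebra.IsKilling ℂ L]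
    (hp : ∀ j, IsInvariantPoly b (p j)) (hindep : AlgebraicIndependent ℂ p)
    (hgen : ∀ P, IsInvariantPoly b P → P ∈ Algebra.adjoin ℂ (Set.range p))
    {q : MvPolynomial (Fin n) ℂ} (hq : Prime q) :
    ∃ U : Matrix (Fin n) ι ℂ,
      ¬ q ∣ (gradMatrix b p * U.map (algebraMap ℂ (MvPolynomial (Fin n) ℂ))).det := by
  by_contra! hdvd
  have hgen' {P : MvPolynomial (Fin n) ℂ} : IsInvariantPoly b P ↔
      ∃ A : MvPolynomial ι ℂ, aeval p A = P := by
    have h : P ∈ Algebra.adjoin ℂ (Set.range p) ↔ ∃ A : MvPolynomial ι ℂ, aeval p A = P := by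
      rw [Algebra.adjoin_range_eq_range_aeval, AlgHom.mem_range]
    rw [← h]
    refine ⟨hgen P, isInvariantPoly_of_mem_adjoin ?_⟩
    rintro _ ⟨j, rfl⟩
    exact hp j
  have hqinv : IsInvariantPoly b q := isInvariantPoly_of_dvd hq.ne_zero fun z => by
    obtain ⟨A, hA⟩ := gradMatrix_map_adDerivation (b := b) hp z
    obtain ⟨U, hU⟩ := exists_det_gradMatrix_mul_ne_zero (b := b) hindep
    exact (adDerivation b z).prime_dvd_apply_of_mem_span
      (fun U => (adDerivation b z).det_mul_mem_span hA U) hq hU hdvd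
  obtain ⟨A, hA⟩ := hgen'.mp hqinv
  obtain ⟨U, hU⟩ := exists_not_dvd_det_pderiv hindep hq hA fun g B hB =>
    hgen'.mp (IsInvariantPoly.of_mul hq.ne_zero hqinv (hgen'.mpr ⟨B, hB.symm⟩))
  refine hU ?_
  rw [← gradMatrix_mul_toMatrix_mul (b := b)]
  exact hdvd _

end GradMatrix

/-- Positive roots `φ`, root vectors `e`, `f` and an orthonormal family `v` for a Cartan
subalgebra `H`, such that `H`, `e` and `f` span the Lie algebra. -/
structure IsRootBasis {L : Type*} [LieRing L] [LieAlgebra ℂ L] (H : LieSubalgebra ℂ L) {r : ℕ}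
    (v : Fin (finrank ℂ H) → H) (φ : Fin r → Module.Dual ℂ H) (e f : Fin r → L) : Prop where
  orthonormal : ∀ i j, killingForm ℂ L (v i : L) (v j : L) = if i = j then 1 else 0
  lie_e : ∀ (i) (h : H), ⁅(h : L), e i⁆ = φ i h • e i
  lie_f : ∀ (i) (h : H), ⁅(h : L), f i⁆ = -(φ i h) • f i
  killingForm_e_f : ∀ i, killingForm ℂ L (e i) (f i) = 1
  ne_zero : ∀ i, φ i ≠ 0
  injective : ∀ i j, i ≠ j → φ i ≠ φ j
  add_ne_zero : ∀ i j, φ i + φ j ≠ 0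
  span_eq_top : H.toSubmodule ⊔ Submodule.span ℂ (Set.range e ∪ Set.range f) = ⊤
  finrank_eq : finrank ℂ L = finrank ℂ H + 2 * r

namespace IsRootBasis

theorem lie_coe_coe {L : Type*} [LieRing L] [LieAlgebra ℂ L] [FiniteDimensional ℂ L]
    {H : LieSubalgebra ℂ L} [H.IsCartanSubalgebra] [LieAlgebra.IsKilling ℂ L] (h h' : H) :
    ⁅(h : L), (h' : L)⁆ = 0 :=
  congrArg Subtype.val (trivial_lie_zero H H h h')

variable {L : Type*} [LieRing L] [LieAlgebra ℂ L]
  {H : LieSubalgebra ℂ L} {r : ℕ}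
  {v : Fin (finrank ℂ H) → H} {φ : Fin r → Module.Dual ℂ H} {e f : Fin r → L}
  (hR : IsRootBasis H v φ e f)

include hR

theorem linearIndependent_v : LinearIndependent ℂ v := by
  rw [Fintype.linearIndependent_iff]
  intro g hg i
  have := congrArg (fun h : H => killingForm ℂ L (h : L) (v i : L)) hg
  simpa [hR.orthonormal, LinearMap.sum_apply] using this

theorem killingForm_sum_v (g : Fin (finrank ℂ H) → ℂ) (j : Fin (finrank ℂ H)) :
    killingForm ℂ L ((∑ i, g i • v i : H) : L) (v j : L) = g j := by
  simp [hR.orthonormal, LinearMap.sum_apply]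

theorem exists_ne_zero (i : Fin r) : ∃ h, φ i h ≠ 0 := by
  by_contra! h
  exact hR.ne_zero i (LinearMap.ext h)

theorem e_ne_zero (i : Fin r) : e i ≠ 0 := fun h => by
  have := hR.killingForm_e_f i
  rw [h, map_zero, LinearMap.zero_apply] at this
  exact zero_ne_one this

theorem exists_forall_ne_zero : ∃ h, ∀ i, φ i h ≠ 0 :=
  Module.Dual.exists_forall_ne_zero_of_forall_exists φ hR.exists_ne_zero

theorem killingForm_lie_e_f (i : Fin r) (h : H) : killingForm ℂ L ⁅e i, f i⁆ (h : L) = φ i h := by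
  rw [killingForm_lie_left, ← lie_skew, hR.lie_f, map_neg, map_smul, hR.killingForm_e_f]
  simp

variable [FiniteDimensional ℂ L]

theorem sum_killingForm_smul_v (h : H) :
    ∑ i, killingForm ℂ L (h : L) (v i : L) • v i = h := by
  let B := Basis.mk hR.linearIndependent_v
    (hR.linearIndependent_v.span_eq_top_of_card_eq_finrank' (by simp)).ge
  have hB : ∑ i, B.repr h i • v i = h := by
    have := B.sum_repr h
    simpa only [B, Basis.coe_mk] using this
  conv_rhs => rw [← hB]
  refine Finset.sum_congr rfl fun i _ => ?_
  conv_lhs => rw [← hB, hR.killingForm_sum_v]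

theorem top_le_span :
    ⊤ ≤ Submodule.span ℂ (Set.range (Sum.elim (fun i => (v i : L)) (Sum.elim e f))) := by
  rw [← hR.span_eq_top, Set.Sum.elim_range, Set.Sum.elim_range, Submodule.span_union _ (_ ∪ _)]
  refine sup_le_sup_right (fun h hh => ?_) _
  rw [← show ((∑ i, killingForm ℂ L h (v i : L) • v i : H) : L) = h from
    congrArg Subtype.val (hR.sum_killingForm_smul_v ⟨h, hh⟩)]
  rw [AddSubmonoidClass.coe_finsetSum]
  exact Submodule.sum_mem _ fun i _ => Submodule.smul_mem _ _ (Submodule.subset_span ⟨i, rfl⟩)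

/-- The basis consisting of `v`, `e` and `f`. -/
noncomputable def basis : Basis (Fin (finrank ℂ H) ⊕ Fin r ⊕ Fin r) ℂ L :=
  basisOfTopLeSpanOfCardEqFinrank _ hR.top_le_span (by
    simp [hR.finrank_eq, two_mul])

@[simp]
theorem basis_inl (i : Fin (finrank ℂ H)) : hR.basis (Sum.inl i) = v i := by simp [basis]

@[simp]
theorem basis_e (i : Fin r) : hR.basis (Sum.inr (Sum.inl i)) = e i := by simp [basis]

@[simp]
theorem basis_f (i : Fin r) : hR.basis (Sum.inr (Sum.inr i)) = f i := by simp [basis]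

variable [LieAlgebra.IsKilling ℂ L] [H.IsCartanSubalgebra]

theorem killingForm_coe_e (h : H) (i : Fin r) : killingForm ℂ L (h : L) (e i) = 0 := by
  obtain ⟨h₀, hh₀⟩ := hR.exists_ne_zero i
  have := killingForm_lie_left (h : L) (h₀ : L) (e i)
  rw [lie_coe_coe, hR.lie_e, map_zero, LinearMap.zero_apply, map_smul, smul_eq_mul] at this
  exact (mul_eq_zero.mp this.symm).resolve_left hh₀

theorem killingForm_coe_f (h : H) (i : Fin r) : killingForm ℂ L (h : L) (f i) = 0 := by
  obtain ⟨h₀, hh₀⟩ := hR.exists_ne_zero i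
  have := killingForm_lie_left (h : L) (h₀ : L) (f i)
  rw [lie_coe_coe, hR.lie_f, map_zero, LinearMap.zero_apply, map_smul, smul_eq_mul] at this
  exact (mul_eq_zero.mp this.symm).resolve_left (neg_ne_zero.mpr hh₀)

/-- A vector orthogonal to all root vectors lies in the Cartan subalgebra. -/
theorem sum_killingForm_smul_coe_v {x : L} (he : ∀ i, killingForm ℂ L x (e i) = 0)
    (hf : ∀ i, killingForm ℂ L x (f i) = 0) :
    ∑ i, killingForm ℂ L x (v i : L) • (v i : L) = x := by
  rw [← sub_eq_zero]
  refine eq_zero_of_killingForm_eq_zero fun y => ?_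
  have : killingForm ℂ L (∑ i, killingForm ℂ L x (v i : L) • (v i : L) - x) = 0 := by
    refine hR.basis.ext fun k => ?_
    rcases k with k | k | k
    · simp [hR.orthonormal, LinearMap.sum_apply]
    · simp [hR.killingForm_coe_e, LinearMap.sum_apply, he]
    · simp [hR.killingForm_coe_f, LinearMap.sum_apply, hf]
  rw [this, LinearMap.zero_apply]

omit [FiniteDimensional ℂ L] [LieAlgebra.IsKilling ℂ L] hR in
theorem genWeightSpace_ne_bot {χ : H → ℂ} {x : L} (hx : x ≠ 0)
    (h : ∀ y : H, ⁅(y : L), x⁆ = χ y • x) : LieModule.genWeightSpace L χ ≠ ⊥ := by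
  intro h0
  have : x ∈ LieModule.genWeightSpace L χ :=
    LieModule.weightSpace_le_genWeightSpace L χ ((LieModule.mem_weightSpace χ x).mpr h)
  rw [h0, LieSubmodule.mem_bot] at this
  exact hx this

/-- Distinct positive roots are not proportional. -/
theorem exists_apply_eq_zero_and_ne_zero {i j : Fin r} (hij : j ≠ i) :
    ∃ h, φ i h = 0 ∧ φ j h ≠ 0 := by
  by_contra! hker
  obtain ⟨h₀, hh₀⟩ := hR.exists_ne_zero i
  let wt (i : Fin r) : LieModule.Weight ℂ H L :=
    ⟨φ i, genWeightSpace_ne_bot (hR.e_ne_zero i) (hR.lie_e i)⟩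
  have hsmul : (wt j : H → ℂ) = (φ j h₀ / φ i h₀) • (wt i : H → ℂ) := by
    refine _root_.funext fun h => ?_
    have := hker (h - (φ i h / φ i h₀) • h₀) (by simp [hh₀])
    rw [map_sub, map_smul, sub_eq_zero] at this
    change φ j h = φ j h₀ / φ i h₀ * φ i h
    rw [this, smul_eq_mul]
    ring
  have hne : (wt j).IsNonZero := fun h0 => hR.ne_zero j (DFunLike.coe_injective h0)
  rcases LieAlgebra.IsKilling.eq_neg_or_eq_of_eq_smul _ _ hne _ hsmul with h | h
  · refine hR.add_ne_zero i j (LinearMap.ext fun y => ?_)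
    have : φ j y = -φ i y := congrArg (fun w : LieModule.Weight ℂ H L => w y) h
    rw [LinearMap.add_apply, this, add_neg_cancel, LinearMap.zero_apply]
  · exact hR.injective j i hij (LinearMap.ext fun y =>
      congrArg (fun w : LieModule.Weight ℂ H L => w y) h)

theorem exists_subregular (i : Fin r) : ∃ h, φ i h = 0 ∧ ∀ j, j ≠ i → φ j h ≠ 0 := by
  obtain ⟨h, hh, hne⟩ := Module.Dual.exists_forall_mem_ne_zero_of_forall_exists
    (LinearMap.ker (φ i)) (fun j : {j // j ≠ i} => φ j) fun j =>
      hR.exists_apply_eq_zero_and_ne_zero j.2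
  exact ⟨h, hh, fun j hj => hne ⟨j, hj⟩⟩

end IsRootBasis

namespace IsRootBasis

variable {L : Type*} [LieRing L] [LieAlgebra ℂ L] [FiniteDimensional ℂ L]
  [LieAlgebra.IsKilling ℂ L] {H : LieSubalgebra ℂ L} [H.IsCartanSubalgebra] {r : ℕ}
  {v : Fin (finrank ℂ H) → H} {φ : Fin r → Module.Dual ℂ H} {e f : Fin r → L}
  (hR : IsRootBasis H v φ e f)

/-- The weights of the basis attached to a root basis. -/
def weight (φ : Fin r → Module.Dual ℂ H) (y : H) : Fin (finrank ℂ H) ⊕ Fin r ⊕ Fin r → ℂ :=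
  Sum.elim (fun _ => 0) (Sum.elim (fun i => φ i y) fun i => -φ i y)

include hR

theorem lie_basis (y : H) (k : Fin (finrank ℂ H) ⊕ Fin r ⊕ Fin r) :
    ⁅(y : L), hR.basis k⁆ = weight φ y k • hR.basis k := by
  rcases k with k | k | k
  · simp [weight, lie_coe_coe]
  · simp [weight, hR.lie_e]
  · simp [weight, hR.lie_f]

theorem repr_lie (y : H) (x : L) (k : Fin (finrank ℂ H) ⊕ Fin r ⊕ Fin r) :
    hR.basis.repr ⁅(y : L), x⁆ k = weight φ y k * hR.basis.repr x k := by
  have : hR.basis.coord k ∘ₗ (LieAlgebra.ad ℂ L y : L →ₗ[ℂ] L) =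
      weight φ y k • hR.basis.coord k := by
    refine hR.basis.ext fun l => ?_
    rw [LinearMap.comp_apply, LieAlgebra.ad_apply, hR.lie_basis, map_smul, LinearMap.smul_apply,
      Basis.coord_apply, Basis.repr_self, smul_eq_mul, smul_eq_mul]
    by_cases h : l = k
    · rw [h]
    · rw [Finsupp.single_eq_of_ne' h, mul_zero, mul_zero]
  exact LinearMap.congr_fun this x

omit [LieAlgebra.IsKilling ℂ L] in
theorem isNilpotent_ad_e (i : Fin r) : IsNilpotent (LieAlgebra.ad ℂ L (e i)) := by
  refine LieAlgebra.isNilpotent_ad_of_mem_rootSpace (H := H) (χ := φ i) ?_ ?_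
  · exact fun h => hR.ne_zero i (LinearMap.ext fun y => congrFun h y)
  · exact LieModule.weightSpace_le_genWeightSpace L _
      ((LieModule.mem_weightSpace _ _).mpr (hR.lie_e i))

theorem lie_eq_zero_of_add_lie_eq_zero {i : Fin r} {y : H} (hy : φ i y = 0) {u : L}
    (hu : ⁅(y : L) + e i, u⁆ = 0) : ⁅(y : L), u⁆ = 0 := by
  set S : Module.End ℂ L := LieAlgebra.ad ℂ L (y : L) with hS
  set N : Module.End ℂ L := LieAlgebra.ad ℂ L (e i) with hN
  have hcomm : Commute S (-N) := by
    refine Commute.neg_right ?_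
    refine LinearMap.ext fun w => ?_
    rw [Module.End.mul_apply, Module.End.mul_apply, hS, hN]
    simp only [LieAlgebra.ad_apply]
    rw [leibniz_lie, hR.lie_e, hy, zero_smul, zero_lie, zero_add]
  have hSu : S u = (-N) u := by
    rw [LinearMap.neg_apply, eq_neg_iff_add_eq_zero]
    rwa [add_lie] at hu
  have hpow (m : ℕ) : (S ^ m) u = ((-N) ^ m) u := by
    induction m with
    | zero => rfl
    | succ m ih =>
      rw [pow_succ', Module.End.mul_apply, ih, ← Module.End.mul_apply, (hcomm.pow_right m).eq,
        Module.End.mul_apply, hSu, ← Module.End.mul_apply, ← pow_succ]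
  obtain ⟨m, hm⟩ := (hR.isNilpotent_ad_e i).neg
  have hrepr (m : ℕ) (k) : hR.basis.repr ((S ^ m) u) k =
      weight φ y k ^ m * hR.basis.repr u k := by
    induction m with
    | zero => simp
    | succ m ih =>
      rw [pow_succ', Module.End.mul_apply, hS, LieAlgebra.ad_apply, hR.repr_lie, ← hS, ih]
      ring
  refine hR.basis.ext_elem fun k => ?_
  have h := hrepr m k
  rw [hpow, hm, LinearMap.zero_apply, map_zero, Finsupp.zero_apply] at h
  rw [hR.repr_lie, map_zero, Finsupp.zero_apply]
  rcases mul_eq_zero.mp h.symm with h | h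
  · rw [eq_zero_of_pow_eq_zero h, zero_mul]
  · rw [h, mul_zero]

/-- Adding a root vector to a subregular element of the corresponding root hyperplane
gives a regular element. -/
theorem finrank_ker_ad_add_e_le {i : Fin r} {y : H} (hy : φ i y = 0)
    (hne : ∀ j, j ≠ i → φ j y ≠ 0) :
    finrank ℂ (LinearMap.ker (LieAlgebra.ad ℂ L ((y : L) + e i))) ≤ finrank ℂ H := by
  have hle : LinearMap.ker (LieAlgebra.ad ℂ L ((y : L) + e i)) ≤
      (LinearMap.ker (φ i)).map H.toSubmodule.subtype ⊔ Submodule.span ℂ {e i} := by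
    intro u hu
    have hu : ⁅(y : L) + e i, u⁆ = 0 := hu
    have hyu := hR.lie_eq_zero_of_add_lie_eq_zero hy hu
    have heu : ⁅e i, u⁆ = 0 := by rwa [add_lie, hyu, zero_add] at hu
    have hzero (k) (hk : weight φ y k ≠ 0) : hR.basis.repr u k = 0 := by
      have := hR.repr_lie y u k
      rw [hyu, map_zero, Finsupp.zero_apply] at this
      exact (mul_eq_zero.mp this.symm).resolve_left hk
    obtain ⟨h, a, c, rfl⟩ : ∃ (h : H) (a c : ℂ), u = h + a • e i + c • f i := by
      refine ⟨∑ j, hR.basis.repr u (Sum.inl j) • v j, hR.basis.repr u (Sum.inr (Sum.inl i)),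
        hR.basis.repr u (Sum.inr (Sum.inr i)), ?_⟩
      conv_lhs => rw [← hR.basis.sum_repr u, Fintype.sum_sum_type, Fintype.sum_sum_type]
      rw [Finset.sum_eq_single_of_mem i (Finset.mem_univ i),
        Finset.sum_eq_single_of_mem i (Finset.mem_univ i), ← add_assoc]
      · simp [AddSubmonoidClass.coe_finsetSum, -Basis.sum_repr]
      · intro j _ hj
        rw [hzero (Sum.inr (Sum.inr j)) (neg_ne_zero.mpr (hne j hj)), zero_smul]
      · intro j _ hj
        rw [hzero (Sum.inr (Sum.inl j)) (hne j hj), zero_smul]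
    have heh : ⁅e i, (h : L)⁆ = -φ i h • e i := by rw [← lie_skew, hR.lie_e, neg_smul]
    rw [lie_add, lie_add, lie_smul, lie_smul, lie_self, smul_zero, add_zero, heh] at heu
    obtain ⟨h₀, hh₀⟩ := hR.exists_ne_zero i
    have hc := congrArg (fun w => killingForm ℂ L w (h₀ : L)) heu
    simp only [map_add, map_smul, LinearMap.add_apply, LinearMap.smul_apply, smul_eq_mul,
      hR.killingForm_lie_e_f, map_zero, LinearMap.zero_apply] at hc
    rw [killingForm_comm (e i), hR.killingForm_coe_e, mul_zero, zero_add] at hc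
    have hc := (mul_eq_zero.mp hc).resolve_right hh₀
    rw [hc, zero_smul, add_zero] at heu
    have hh := (smul_eq_zero.mp heu).resolve_right (hR.e_ne_zero i)
    rw [hc, zero_smul, add_zero]
    exact Submodule.add_mem_sup ⟨h, neg_eq_zero.mp hh, rfl⟩
      (Submodule.smul_mem _ _ (Submodule.mem_span_singleton_self _))
  calc _ ≤ _ := Submodule.finrank_mono hle
    _ ≤ _ := Submodule.finrank_add_le_finrank_add_finrank _ _
    _ ≤ finrank ℂ (LinearMap.ker (φ i)) + 1 := by
      refine add_le_add (Submodule.finrank_map_le _ _) ?_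
      rw [finrank_span_singleton (hR.e_ne_zero i)]
    _ = _ := Module.Dual.finrank_ker_add_one_of_ne_zero (hR.ne_zero i)

end IsRootBasis

section LinearForms

variable {L : Type*} [LieRing L] [LieAlgebra ℂ L] {n : ℕ} {b : Basis (Fin n) ℂ L}

theorem evalAt_zero (P : MvPolynomial (Fin n) ℂ) : evalAt b 0 P = constantCoeff P := by
  rw [evalAt, map_zero]
  exact DFunLike.congr_fun eval_zero P

theorem irreducible_linForm {g : L →ₗ[ℂ] ℂ} (hg : g ≠ 0) : Irreducible (linForm b g) := by
  have h0 : linForm b g ≠ 0 := fun h => hg (LinearMap.ext fun x => by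
    rw [← evalAt_linForm (b := b), h, map_zero, LinearMap.zero_apply])
  have hom : (linForm b g).IsHomogeneous 1 := by
    refine IsHomogeneous.sum _ _ _ fun i _ => ?_
    simpa using (isHomogeneous_C (Fin n) (g (b i))).mul (isHomogeneous_X ℂ i)
  refine irreducible_of_totalDegree_eq_one (hom.totalDegree h0) fun x hx => ?_
  obtain ⟨i, hi⟩ := ne_zero_iff.mp h0
  exact (ne_zero_of_dvd_ne_zero hi (hx i)).isUnit

variable {H : LieSubalgebra ℂ L} {m : ℕ} {bH : Basis (Fin m) ℂ H}

/-- Restriction of polynomial functions to a subalgebra. -/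
noncomputable def restrictPoly (b : Basis (Fin n) ℂ L) (bH : Basis (Fin m) ℂ H) :
    MvPolynomial (Fin n) ℂ →ₐ[ℂ] MvPolynomial (Fin m) ℂ :=
  aeval fun i => linForm bH (b.coord i ∘ₗ H.toSubmodule.subtype)

@[simp]
theorem evalAt_restrictPoly (y : H) (P : MvPolynomial (Fin n) ℂ) :
    evalAt bH y (restrictPoly b bH P) = evalAt b (y : L) P := by
  have : (evalAt bH y).comp (restrictPoly b bH : MvPolynomial (Fin n) ℂ →+* _) =
      evalAt b (y : L) := by
    refine MvPolynomial.ringHom_ext (fun c => ?_) fun i => ?_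
    · simp [restrictPoly]
    · simp [restrictPoly, -Basis.coord_apply]
      rfl
  exact RingHom.congr_fun this P

end LinearForms

section DegeneracyIdeal

variable {L : Type*} [LieRing L] [LieAlgebra ℂ L] {n : ℕ} {b : Basis (Fin n) ℂ L}
  {ι : Type*} [Fintype ι] [DecidableEq ι] {U₀ : Matrix (Fin n) ι ℂ} {W₀ : Matrix ι (Fin n) ℂ}

theorem isInvariantPoly_of_dvd_det [FiniteDimensional ℂ L] [LieAlgebra.IsKilling ℂ L]
    (h₀ : (bracketMatrix b + (U₀ * W₀).map (algebraMap ℂ (MvPolynomial (Fin n) ℂ))).det ≠ 0)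
    {q : MvPolynomial (Fin n) ℂ} (hq : Prime q)
    (hdvd : ∀ (U : Matrix (Fin n) ι ℂ) (W : Matrix ι (Fin n) ℂ),
      q ∣ (bracketMatrix b + (U * W).map (algebraMap ℂ (MvPolynomial (Fin n) ℂ))).det) :
    IsInvariantPoly b q :=
  isInvariantPoly_of_dvd hq.ne_zero fun z =>
    (adDerivation b z).prime_dvd_apply_of_mem_span
      (F := fun P : Matrix (Fin n) ι ℂ × Matrix ι (Fin n) ℂ =>
        (bracketMatrix b + (P.1 * P.2).map (algebraMap ℂ (MvPolynomial (Fin n) ℂ))).det)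
      (fun P => (adDerivation b z).det_add_mul_mem_span (bracketMatrix_map_adDerivation z) P.1 P.2)
      hq (i₀ := (U₀, W₀)) h₀ fun P => hdvd P.1 P.2

theorem constantCoeff_eq_zero_of_dvd_det
    (h₀ : (bracketMatrix b + (U₀ * W₀).map (algebraMap ℂ (MvPolynomial (Fin n) ℂ))).det ≠ 0)
    {q : MvPolynomial (Fin n) ℂ} (hq : Prime q)
    (hdvd : ∀ (U : Matrix (Fin n) ι ℂ) (W : Matrix ι (Fin n) ℂ),
      q ∣ (bracketMatrix b + (U * W).map (algebraMap ℂ (MvPolynomial (Fin n) ℂ))).det) :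
    constantCoeff q = 0 := by
  by_contra h0
  have hE := (linearDerivation (1 : Matrix (Fin n) (Fin n) ℂ)).prime_dvd_apply_of_mem_span
    (F := fun P : Matrix (Fin n) ι ℂ × Matrix ι (Fin n) ℂ =>
      (bracketMatrix b + (P.1 * P.2).map (algebraMap ℂ (MvPolynomial (Fin n) ℂ))).det)
    (fun P => (linearDerivation (1 : Matrix (Fin n) (Fin n) ℂ)).det_add_mul_mem_span
      bracketMatrix_map_linearDerivation_one P.1 P.2)
    hq (i₀ := (U₀, W₀)) h₀ fun P => hdvd P.1 P.2
  obtain ⟨c, hc⟩ := exists_linearDerivation_eq_C_mul hq.ne_zero hE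
  refine hq.not_isUnit ?_
  rw [eq_C_of_linearDerivation_one hc h0]
  exact (Ne.isUnit h0).map C

end DegeneracyIdeal

namespace IsRootBasis

variable {L : Type*} [LieRing L] [LieAlgebra ℂ L] {n : ℕ} {b : Basis (Fin n) ℂ L}
  {H : LieSubalgebra ℂ L} {r : ℕ}

/-- The coordinates of the linear forms `κ(v j, ·)`. -/
noncomputable def formMatrix (b : Basis (Fin n) ℂ L) (v : Fin (finrank ℂ H) → H) :
    Matrix (Fin n) (Fin (finrank ℂ H)) ℂ :=
  Matrix.of fun k j => killingForm ℂ L (b k) (v j : L)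

variable {v : Fin (finrank ℂ H) → H} {φ : Fin r → Module.Dual ℂ H} {e f : Fin r → L}
  [FiniteDimensional ℂ L] [LieAlgebra.IsKilling ℂ L] [H.IsCartanSubalgebra]
  (hR : IsRootBasis H v φ e f)

include hR

theorem evalAt_det_bracketMatrix_add (y : H) :
    evalAt b (y : L) (bracketMatrix b + (formMatrix b v * (formMatrix b v).transpose).map
      (algebraMap ℂ (MvPolynomial (Fin n) ℂ))).det =
      (LinearMap.BilinForm.toMatrix b (killingForm ℂ L)).det * (-1) ^ r * (∏ i, φ i y) ^ 2 := by
  let T : L →ₗ[ℂ] L := ∑ j, (killingForm ℂ L (v j : L)).smulRight (v j : L) - LieAlgebra.ad ℂ L y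
  have hmat : (bracketMatrix b + (formMatrix b v * (formMatrix b v).transpose).map
      (algebraMap ℂ (MvPolynomial (Fin n) ℂ))).map (evalAt b (y : L)) =
      LinearMap.BilinForm.toMatrix b (killingForm ℂ L) * LinearMap.toMatrix b b T := by
    refine Matrix.ext fun k l => ?_
    have h := sum_toMatrix_mul (b := b) T (killingForm ℂ L (b k)) l
    rw [Matrix.map_apply, Matrix.add_apply, map_add, evalAt_bracketMatrix, Matrix.map_apply,
      evalAt_algebraMap, Matrix.mul_apply, Matrix.mul_apply]
    simp only [LinearMap.BilinForm.toMatrix_apply]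
    simp only [mul_comm (killingForm ℂ L (b k) _)]
    rw [h]
    have : killingForm ℂ L ⁅b k, b l⁆ (y : L) = -killingForm ℂ L (b k) ⁅(y : L), b l⁆ := by
      rw [killingForm_lie_left, ← lie_skew, map_neg]
    simp only [T, LinearMap.sub_apply, LinearMap.sum_apply, LinearMap.smulRight_apply, map_sub,
      map_sum, map_smul, smul_eq_mul, LieAlgebra.ad_apply, formMatrix, Matrix.of_apply,
      Matrix.transpose_apply, this, killingForm_comm (v _ : L) (b l)]
    simp only [mul_comm (killingForm ℂ L (b l) _)]
    ring
  have hT : LinearMap.toMatrix hR.basis hR.basis T =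
      Matrix.diagonal (Sum.elim (fun _ => 1) (Sum.elim (fun i => -φ i y) fun i => φ i y)) := by
    refine Matrix.ext fun k l => ?_
    have hTl : T (hR.basis l) =
        Sum.elim (fun _ => 1) (Sum.elim (fun i => -φ i y) fun i => φ i y) l • hR.basis l := by
      simp only [T, LinearMap.sub_apply, LieAlgebra.ad_apply, hR.lie_basis]
      rcases l with l | l | l
      · simp [weight, LinearMap.sum_apply, hR.orthonormal]
      · simp [weight, LinearMap.sum_apply, hR.killingForm_coe_e]
      · simp [weight, LinearMap.sum_apply, hR.killingForm_coe_f]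
    rw [LinearMap.toMatrix_apply, hTl, map_smul, Basis.repr_self, Finsupp.smul_apply,
      Matrix.diagonal_apply]
    split_ifs with h
    · rw [h, Finsupp.single_eq_same, smul_eq_mul, mul_one]
    · rw [Finsupp.single_eq_of_ne h, smul_zero]
  rw [RingHom.map_det, RingHom.mapMatrix_apply, hmat, Matrix.det_mul, LinearMap.det_toMatrix,
    ← LinearMap.det_toMatrix hR.basis, hT, Matrix.det_diagonal, Fintype.prod_sum_type,
    Fintype.prod_sum_type]
  simp only [Sum.elim_inl, Sum.elim_inr, Finset.prod_const_one, one_mul, Finset.prod_neg,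
    Finset.card_univ, Fintype.card_fin]
  ring

theorem det_bracketMatrix_add_ne_zero :
    (bracketMatrix b + (formMatrix b v * (formMatrix b v).transpose).map
      (algebraMap ℂ (MvPolynomial (Fin n) ℂ))).det ≠ 0 := by
  intro h
  obtain ⟨y, hy⟩ := hR.exists_forall_ne_zero
  have := hR.evalAt_det_bracketMatrix_add (b := b) y
  rw [h, map_zero] at this
  refine mul_ne_zero (mul_ne_zero isUnit_det_toMatrix_killingForm.ne_zero
    (pow_ne_zero r (neg_ne_zero.mpr one_ne_zero)))
    (pow_ne_zero 2 (Finset.prod_ne_zero_iff.mpr fun i _ => hy i)) this.symm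

/-- An invariant divisor without constant term of the restricted determinant vanishes on a
root hyperplane. -/
theorem exists_evalAt_eq_zero {q : MvPolynomial (Fin n) ℂ} (h0 : constantCoeff q = 0)
    (hq : q ∣ (bracketMatrix b + (formMatrix b v * (formMatrix b v).transpose).map
      (algebraMap ℂ (MvPolynomial (Fin n) ℂ))).det) :
    ∃ i, ∀ y, φ i y = 0 → evalAt b (y : L) q = 0 := by
  let bH := finBasis ℂ H
  have hD : restrictPoly b bH (bracketMatrix b + (formMatrix b v * (formMatrix b v).transpose).map
      (algebraMap ℂ (MvPolynomial (Fin n) ℂ))).det =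
      C ((LinearMap.BilinForm.toMatrix b (killingForm ℂ L)).det * (-1) ^ r) *
        (∏ i, linForm bH (φ i)) ^ 2 := by
    refine evalAt_ext (b := bH) fun y => ?_
    rw [evalAt_restrictPoly, hR.evalAt_det_bracketMatrix_add]
    simp [map_prod]
  have hunit : IsUnit ((LinearMap.BilinForm.toMatrix b (killingForm ℂ L)).det * (-1) ^ r) :=
    isUnit_det_toMatrix_killingForm.mul ((isUnit_one.neg).pow r)
  have hdvd := map_dvd (restrictPoly b bH) hq
  rw [hD, (hunit.map C).dvd_mul_left] at hdvd
  have hne : restrictPoly b bH q ≠ 0 := by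
    refine ne_zero_of_dvd_ne_zero (pow_ne_zero 2 (Finset.prod_ne_zero_iff.mpr fun i _ => ?_)) hdvd
    exact (irreducible_linForm (hR.ne_zero i)).ne_zero
  have hnu : ¬ IsUnit (restrictPoly b bH q) := fun hu => by
    have := (hu.map (evalAt bH 0)).ne_zero
    rw [evalAt_restrictPoly, ZeroMemClass.coe_zero, evalAt_zero] at this
    exact this h0
  obtain ⟨π, hπ, hπq⟩ := WfDvdMonoid.exists_irreducible_factor hnu hne
  obtain ⟨i, -, hi⟩ := (hπ.prime.dvd_finsetProd_iff _).mp
    (hπ.prime.dvd_of_dvd_pow (hπq.trans hdvd))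
  refine ⟨i, fun y hy => ?_⟩
  obtain ⟨g, hg⟩ := ((hπ.dvd_symm (irreducible_linForm (hR.ne_zero i)) hi).trans hπq)
  rw [← evalAt_restrictPoly (bH := bH), hg, map_mul, evalAt_linForm, hy, zero_mul]

theorem exists_not_dvd_det_bracketMatrix_add {q : MvPolynomial (Fin n) ℂ} (hq : Prime q)
    (hdvd₀ : q ∣ (bracketMatrix b + (formMatrix b v * (formMatrix b v).transpose).map
      (algebraMap ℂ (MvPolynomial (Fin n) ℂ))).det) :
    ∃ (U : Matrix (Fin n) (Fin (finrank ℂ H)) ℂ) (W : Matrix (Fin (finrank ℂ H)) (Fin n) ℂ),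
      ¬ q ∣ (bracketMatrix b + (U * W).map (algebraMap ℂ (MvPolynomial (Fin n) ℂ))).det := by
  by_contra! hdvd
  have hinv := isInvariantPoly_of_dvd_det hR.det_bracketMatrix_add_ne_zero hq hdvd
  have h0 := constantCoeff_eq_zero_of_dvd_det hR.det_bracketMatrix_add_ne_zero hq hdvd
  obtain ⟨i, hi⟩ := hR.exists_evalAt_eq_zero h0 hdvd₀
  obtain ⟨y, hy, hyne⟩ := hR.exists_subregular i
  obtain ⟨h, hh⟩ := hR.exists_ne_zero i
  have hqe : evalAt b ((y : L) + e i) q = 0 := by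
    rw [hinv.evalAt_add hh (lie_coe_coe h y) (hR.lie_e i h), hi y hy]
  obtain ⟨U, W, hUW⟩ := Matrix.exists_det_add_mul_ne_zero (l := Fin (finrank ℂ H))
    (T := (bracketMatrix b).map (evalAt b ((y : L) + e i))) (by
      rw [finrank_ker_bracketMatrix, Fintype.card_fin]
      exact hR.finrank_ker_ad_add_e_le hy hyne)
  obtain ⟨g, hg⟩ := hdvd U W
  have := congrArg (evalAt b ((y : L) + e i)) hg
  rw [map_mul, hqe, zero_mul, RingHom.map_det, RingHom.mapMatrix_apply] at this
  refine hUW (Eq.trans (congrArg Matrix.det (Matrix.ext fun k l => ?_)) this)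
  rw [Matrix.map_apply, Matrix.add_apply, Matrix.add_apply, map_add, Matrix.map_apply,
    Matrix.map_apply, evalAt_algebraMap]

end IsRootBasis

theorem AlternatingMap.map_sum_smul {R M N ι : Type*} [CommRing R] [AddCommGroup M] [Module R M]
    [AddCommGroup N] [Module R N] [Fintype ι] [DecidableEq ι] (f : M [⋀^ι]→ₗ[R] N)
    (A : Matrix ι ι R) (v : ι → M) : f (fun j => ∑ k, A j k • v k) = A.det • f v := by
  have hv (k : ι) : Fintype.linearCombination R v (Pi.basisFun R ι k) = v k := by
    simp [Fintype.linearCombination_apply, Pi.single_apply]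
  have h : f.compLinearMap (Fintype.linearCombination R v) =
      Matrix.detRowAlternating.smulRight (f v) := by
    refine (Pi.basisFun R ι).ext_alternating fun s hs => ?_
    let σ := Equiv.ofBijective s (Finite.injective_iff_bijective.mp hs)
    change (f.compLinearMap _) (Pi.basisFun R ι ∘ σ) =
      (Matrix.detRowAlternating.smulRight (f v)) (Pi.basisFun R ι ∘ σ)
    rw [AlternatingMap.map_perm, AlternatingMap.map_perm, AlternatingMap.compLinearMap_apply,
      AlternatingMap.smulRight_apply]
    have hdet : Matrix.detRowAlternating (Pi.basisFun R ι) = (1 : R) := by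
      rw [show (⇑(Pi.basisFun R ι) : ι → ι → R) = (1 : Matrix ι ι R) from
        Matrix.ext fun i j => by simp [Pi.single_apply, Matrix.one_apply, eq_comm]]
      exact Matrix.det_one
    simp only [hv, hdet, one_smul]
  exact AlternatingMap.congr_fun h A

section Gradients

variable {L : Type*} [LieRing L] [LieAlgebra ℂ L] [FiniteDimensional ℂ L] [LieAlgebra.IsKilling ℂ L]
  {n : ℕ} {b : Basis (Fin n) ℂ L} {ι : Type*} {p : ι → MvPolynomial (Fin n) ℂ} {grad : ι → L → L}

omit [FiniteDimensional ℂ L] in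
theorem lie_grad_eq_zero (hp : ∀ j, IsInvariantPoly b (p j))
    (hgrad : ∀ j x y, killingForm ℂ L (grad j x) y = evalAt b x (dirDeriv b y (p j)))
    (j : ι) (x : L) : ⁅x, grad j x⁆ = 0 := by
  refine eq_zero_of_killingForm_eq_zero fun y => ?_
  rw [← neg_eq_zero, killingForm_comm, ← lie_skew, map_neg, neg_neg, killingForm_comm,
    killingForm_lie_left, hgrad, ← lie_skew, ← neg_one_smul ℂ]
  have := hp j x y
  rw [evalAt_dirDeriv, map_smul]
  simp only [Finsupp.smul_apply, smul_eq_mul, mul_assoc]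
  rw [← Finset.mul_sum, ← evalAt_dirDeriv]
  exact mul_eq_zero_of_right _ this

variable [Fintype ι] [DecidableEq ι]

theorem linearIndependent_grad_iff
    (hgrad : ∀ j x y, killingForm ℂ L (grad j x) y = evalAt b x (dirDeriv b y (p j))) (x : L) :
    LinearIndependent ℂ (fun j => grad j x) ↔ ∃ U : Matrix (Fin n) ι ℂ,
      evalAt b x (gradMatrix b p * U.map (algebraMap ℂ (MvPolynomial (Fin n) ℂ))).det ≠ 0 := by
  have hrow : ((gradMatrix b p).map (evalAt b x)).row = b.equivFun ∘ fun j => grad j x :=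
    Matrix.ext fun j k => evalAt_gradMatrix (hgrad j x) k
  have hmap (U : Matrix (Fin n) ι ℂ) :
      evalAt b x (gradMatrix b p * U.map (algebraMap ℂ (MvPolynomial (Fin n) ℂ))).det =
      ((gradMatrix b p).map (evalAt b x) * U).det := by
    rw [RingHom.map_det, RingHom.mapMatrix_apply, Matrix.map_mul]
    refine congrArg (fun V => ((gradMatrix b p).map (evalAt b x) * V).det)
      (Matrix.ext fun k l => ?_)
    rw [Matrix.map_apply, Matrix.map_apply, evalAt_algebraMap]
  simp only [hmap]
  rw [← Matrix.linearIndependent_rows_iff_exists_det_mul_ne_zero, hrow,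
    ← LinearMap.linearIndependent_iff (b.equivFun : L →ₗ[ℂ] Fin n → ℂ) b.equivFun.ker]
  rfl

omit [FiniteDimensional ℂ L] [DecidableEq ι] in
theorem finrank_ker_ad_le_iff (x : L) :
    finrank ℂ (LinearMap.ker (LieAlgebra.ad ℂ L x)) ≤ Fintype.card ι ↔
      ∃ (U : Matrix (Fin n) ι ℂ) (W : Matrix ι (Fin n) ℂ), evalAt b x (bracketMatrix b +
        (U * W).map (algebraMap ℂ (MvPolynomial (Fin n) ℂ))).det ≠ 0 := by
  have hmap (U : Matrix (Fin n) ι ℂ) (W : Matrix ι (Fin n) ℂ) :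
      evalAt b x (bracketMatrix b +
        (U * W).map (algebraMap ℂ (MvPolynomial (Fin n) ℂ))).det =
      ((bracketMatrix b).map (evalAt b x) + U * W).det := by
    rw [RingHom.map_det, RingHom.mapMatrix_apply]
    refine congrArg Matrix.det (Matrix.ext fun k l => ?_)
    rw [Matrix.map_apply, Matrix.add_apply, Matrix.add_apply, map_add, Matrix.map_apply,
      Matrix.map_apply, evalAt_algebraMap]
  simp only [hmap]
  rw [← finrank_ker_bracketMatrix (b := b)]
  refine ⟨fun h => Matrix.exists_det_add_mul_ne_zero h, ?_⟩
  rintro ⟨U, W, h⟩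
  exact Matrix.finrank_ker_le_of_det_add_mul_ne_zero h

end Gradients

namespace IsRootBasis

variable {L : Type*} [LieRing L] [LieAlgebra ℂ L] [FiniteDimensional ℂ L] [LieAlgebra.IsKilling ℂ L]
  {n : ℕ} {b : Basis (Fin n) ℂ L} {H : LieSubalgebra ℂ L} [H.IsCartanSubalgebra] {r : ℕ}
  {p : Fin (finrank ℂ H) → MvPolynomial (Fin n) ℂ} {grad : Fin (finrank ℂ H) → L → L}
  {v : Fin (finrank ℂ H) → H} {φ : Fin r → Module.Dual ℂ H} {e f : Fin r → L}
  (hR : IsRootBasis H v φ e f)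

include hR

/-- The polynomials defining the regular locus are products of maximal minors of the gradients. -/
theorem exists_det_bracketMatrix_add_eq (hp : ∀ j, IsInvariantPoly b (p j))
    (hindep : AlgebraicIndependent ℂ p)
    (hgen : ∀ P, IsInvariantPoly b P → P ∈ Algebra.adjoin ℂ (Set.range p))
    (hgrad : ∀ j x y, killingForm ℂ L (grad j x) y = evalAt b x (dirDeriv b y (p j))) :
    ∃ c : ℂ, c ≠ 0 ∧ ∀ (U : Matrix (Fin n) (Fin (finrank ℂ H)) ℂ)
      (W : Matrix (Fin (finrank ℂ H)) (Fin n) ℂ),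
      (bracketMatrix b + (U * W).map (algebraMap ℂ (MvPolynomial (Fin n) ℂ))).det =
        C c * ((gradMatrix b p * U.map (algebraMap ℂ (MvPolynomial (Fin n) ℂ))).det *
          (gradMatrix b p * W.transpose.map (algebraMap ℂ (MvPolynomial (Fin n) ℂ))).det) :=
  exists_det_add_mul_eq (gradMatrix_mul_bracketMatrix hp hgrad)
    (bracketMatrix_mul_transpose_gradMatrix hp hgrad)
    (D := fun U W => (bracketMatrix b + (U * W).map (algebraMap ℂ (MvPolynomial (Fin n) ℂ))).det)
    (ω := fun U => (gradMatrix b p * U.map (algebraMap ℂ (MvPolynomial (Fin n) ℂ))).det)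
    (fun _ _ => rfl) (fun _ => rfl) (U₀ := formMatrix b v) hR.det_bracketMatrix_add_ne_zero
    (exists_det_gradMatrix_mul_ne_zero hindep)
    (fun _ hq h => hR.exists_not_dvd_det_bracketMatrix_add hq h)
    (fun _ hq _ => exists_not_dvd_det_gradMatrix_mul hp hindep hgen hq)

theorem linearIndependent_grad_iff_finrank (hp : ∀ j, IsInvariantPoly b (p j))
    (hindep : AlgebraicIndependent ℂ p)
    (hgen : ∀ P, IsInvariantPoly b P → P ∈ Algebra.adjoin ℂ (Set.range p))
    (hgrad : ∀ j x y, killingForm ℂ L (grad j x) y = evalAt b x (dirDeriv b y (p j))) (x : L) :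
    LinearIndependent ℂ (fun j => grad j x) ↔
      finrank ℂ (LinearMap.ker (LieAlgebra.ad ℂ L x)) = finrank ℂ H := by
  obtain ⟨c, hc, hcD⟩ := hR.exists_det_bracketMatrix_add_eq hp hindep hgen hgrad
  have hle := finrank_ker_ad_le_iff (b := b) (ι := Fin (finrank ℂ H)) x
  rw [Fintype.card_fin] at hle
  refine ⟨fun h => le_antisymm (hle.mpr ?_) ?_, fun h => ?_⟩
  · obtain ⟨U, hU⟩ := (linearIndependent_grad_iff hgrad x).mp h
    refine ⟨U, U.transpose, ?_⟩
    rw [hcD, Matrix.transpose_transpose, map_mul, map_mul, evalAt_C]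
    exact mul_ne_zero hc (mul_ne_zero hU hU)
  · have h' : LinearIndependent ℂ fun j =>
        (⟨grad j x, lie_grad_eq_zero hp hgrad j x⟩ : LinearMap.ker (LieAlgebra.ad ℂ L x)) :=
      h.of_comp (LinearMap.ker (LieAlgebra.ad ℂ L x)).subtype
    simpa using h'.fintype_card_le_finrank
  · obtain ⟨U, W, hUW⟩ := hle.mp h.le
    rw [hcD, map_mul, map_mul] at hUW
    exact (linearIndependent_grad_iff hgrad x).mpr
      ⟨U, left_ne_zero_of_mul (right_ne_zero_of_mul hUW)⟩

omit [H.IsCartanSubalgebra] hR in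
theorem evalAt_det_gradMatrix_mul_formMatrix
    (hgrad : ∀ j x y, killingForm ℂ L (grad j x) y = evalAt b x (dirDeriv b y (p j))) (x : L) :
    evalAt b x (gradMatrix b p *
      (formMatrix b v).map (algebraMap ℂ (MvPolynomial (Fin n) ℂ))).det =
      (Matrix.of fun j k => killingForm ℂ L (grad j x) (v k : L)).det := by
  rw [RingHom.map_det, RingHom.mapMatrix_apply]
  refine congrArg Matrix.det (Matrix.ext fun j k => ?_)
  rw [Matrix.map_apply, Matrix.mul_apply, map_sum, Matrix.of_apply]
  simp only [map_mul, evalAt_gradMatrix (hgrad j x), Matrix.map_apply, evalAt_algebraMap,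
    formMatrix, Matrix.of_apply]
  exact sum_repr_mul ((killingForm ℂ L).flip (v k : L)) (grad j x)

theorem exists_det_killingForm_grad_eq (hp : ∀ j, IsInvariantPoly b (p j))
    (hindep : AlgebraicIndependent ℂ p)
    (hgen : ∀ P, IsInvariantPoly b P → P ∈ Algebra.adjoin ℂ (Set.range p))
    (hgrad : ∀ j x y, killingForm ℂ L (grad j x) y = evalAt b x (dirDeriv b y (p j))) :
    ∃ κ : ℂ, κ ≠ 0 ∧ ∀ y : H,
      (Matrix.of fun j k => killingForm ℂ L (grad j (y : L)) (v k : L)).det =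
        κ * ∏ i, φ i y := by
  obtain ⟨c, hc, hcD⟩ := hR.exists_det_bracketMatrix_add_eq hp hindep hgen hgrad
  set d := (LinearMap.BilinForm.toMatrix b (killingForm ℂ L)).det * (-1) ^ r with hd
  have hd0 : d ≠ 0 :=
    mul_ne_zero isUnit_det_toMatrix_killingForm.ne_zero
      (pow_ne_zero r (neg_ne_zero.mpr one_ne_zero))
  obtain ⟨s, hs⟩ := IsAlgClosed.exists_pow_nat_eq (d / c) two_pos
  have hs0 : s ≠ 0 := by
    rintro rfl
    rw [zero_pow two_ne_zero] at hs
    exact div_ne_zero hd0 hc hs.symm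
  let bH := finBasis ℂ H
  set P := restrictPoly b bH (gradMatrix b p *
    (formMatrix b v).map (algebraMap ℂ (MvPolynomial (Fin n) ℂ))).det with hP
  have hsq : P ^ 2 = (C s * ∏ i, linForm bH (φ i)) ^ 2 := by
    refine evalAt_ext (b := bH) fun y => ?_
    have h := hR.evalAt_det_bracketMatrix_add (b := b) y
    rw [hcD, Matrix.transpose_transpose, map_mul, map_mul, evalAt_C, ← hd] at h
    rw [map_pow, hP, evalAt_restrictPoly, map_pow, map_mul, map_prod, mul_pow, evalAt_C, hs]
    simp only [evalAt_linForm]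
    rw [div_mul_eq_mul_div, eq_div_iff hc, ← h]
    ring
  have key {t : ℂ} (h : P = C t * ∏ i, linForm bH (φ i)) (y : H) :
      (Matrix.of fun j k => killingForm ℂ L (grad j (y : L)) (v k : L)).det = t * ∏ i, φ i y := by
    rw [← evalAt_det_gradMatrix_mul_formMatrix hgrad, ← evalAt_restrictPoly (bH := bH), ← hP, h,
      map_mul, evalAt_C, map_prod]
    simp only [evalAt_linForm]
  rcases sq_eq_sq_iff_eq_or_eq_neg.mp hsq with h | h
  · exact ⟨s, hs0, key h⟩
  · exact ⟨-s, neg_ne_zero.mpr hs0, key (by rw [h, map_neg, neg_mul])⟩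

theorem sum_killingForm_grad_smul (hp : ∀ j, IsInvariantPoly b (p j))
    (hgrad : ∀ j x y, killingForm ℂ L (grad j x) y = evalAt b x (dirDeriv b y (p j)))
    (j : Fin (finrank ℂ H)) (y : H) :
    ∑ k, killingForm ℂ L (grad j (y : L)) (v k : L) • (v k : L) = grad j (y : L) := by
  refine hR.sum_killingForm_smul_coe_v (fun i => ?_) fun i => ?_
  · obtain ⟨h, hh⟩ := hR.exists_ne_zero i
    rw [hgrad, (hp j).evalAt_dirDeriv_eq_zero hh (lie_coe_coe h y) (hR.lie_e i h)]
  · obtain ⟨h, hh⟩ := hR.exists_ne_zero i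
    rw [hgrad, (hp j).evalAt_dirDeriv_eq_zero (neg_ne_zero.mpr hh) (lie_coe_coe h y)
      (hR.lie_f i h)]

end IsRootBasis

/-- Let `p₁, …, p_ℓ` be homogeneous generators of the invariant ring `S(g)^G` of a
complex semisimple Lie algebra `g` of rank `ℓ`, with Killing-form gradients
`∇p_j` (`B(∇p_j(x), y) = ∂_y p_j (x)`).  Then for `x ∈ g` the gradients
`∇p₁(x), …, ∇p_ℓ(x)` are linearly independent iff `x` is regular
(`dim g^x = ℓ`).  Consequently, for `y` in a Cartan subalgebra `H` with `B`-orthonormal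
basis `v₁, …, v_ℓ` and positive roots `φ₁, …, φ_r` (with root vectors as usual),
`∇p₁(y) ∧ ⋯ ∧ ∇p_ℓ(y) = κ · (∏_{φ ∈ Δ₊} φ(y)) · v₁ ∧ ⋯ ∧ v_ℓ`
for a fixed nonzero constant `κ`. -/
theorem stmt15 (L : Type*) [LieRing L] [LieAlgebra ℂ L] [FiniteDimensional ℂ L]
    [LieAlgebra.IsSemisimple ℂ L]
    (H : LieSubalgebra ℂ L) [H.IsCartanSubalgebra]
    (n r : ℕ) (hn : finrank ℂ L = n) (hnr : n = finrank ℂ H + 2 * r)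
    (b : Basis (Fin n) ℂ L)
    (m : Fin (finrank ℂ H) → ℕ) (p : Fin (finrank ℂ H) → MvPolynomial (Fin n) ℂ)
    (hhom : ∀ j, (p j).IsHomogeneous (m j + 1))
    (hinv : ∀ j, IsInvariantPoly b (p j))
    (hindep : AlgebraicIndependent ℂ p)
    (hgen : ∀ P : MvPolynomial (Fin n) ℂ, IsInvariantPoly b P →
      P ∈ Algebra.adjoin ℂ (Set.range p))
    (grad : Fin (finrank ℂ H) → L → L)
    (hgrad : ∀ j (x y : L), killingForm ℂ L (grad j x) y =
      MvPolynomial.eval (fun i => b.repr x i) (dirDeriv b y (p j)))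
    -- an orthonormal basis of the Cartan subalgebra
    (v : Fin (finrank ℂ H) → H)
    (hvbasis : LinearIndependent ℂ v)
    (hvON : ∀ i j, killingForm ℂ L (v i : L) (v j : L) = if i = j then 1 else 0)
    -- the positive roots and associated root vectors
    (φ : Fin r → Module.Dual ℂ H) (e f : Fin r → L)
    (he : ∀ (i) (h : H), ⁅(h : L), e i⁆ = φ i h • e i)
    (hf : ∀ (i) (h : H), ⁅(h : L), f i⁆ = -(φ i h) • f i)
    (hnorm : ∀ i, killingForm ℂ L (e i) (f i) = 1)
    (hφne : ∀ i, φ i ≠ 0)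
    (hφinj : ∀ i j, i ≠ j → φ i ≠ φ j)
    (hpos : ∀ i j, φ i + φ j ≠ 0)
    (hspan : H.toSubmodule ⊔ Submodule.span ℂ (Set.range e ∪ Set.range f) = ⊤) :
    (∀ x : L, LinearIndependent ℂ (fun j => grad j x) ↔
      finrank ℂ (LinearMap.ker (LieAlgebra.ad ℂ L x)) = finrank ℂ H) ∧
    ∃ κ : ℂ, κ ≠ 0 ∧ ∀ y : H,
      (List.ofFn fun j => ι ℂ (grad j (y : L))).prod =
        (κ * ∏ i, φ i y) • (List.ofFn fun j => ι ℂ ((v j : L))).prod := by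
  have hR : IsRootBasis H v φ e f :=
    ⟨hvON, he, hf, hnorm, hφne, hφinj, hpos, hspan, hn.trans hnr⟩
  refine ⟨hR.linearIndependent_grad_iff_finrank hinv hindep hgen hgrad, ?_⟩
  obtain ⟨κ, hκ, hdet⟩ := hR.exists_det_killingForm_grad_eq hinv hindep hgen hgrad
  refine ⟨κ, hκ, fun y => ?_⟩
  rw [← hdet, ← ιMulti_apply, ← ιMulti_apply, ← AlternatingMap.map_sum_smul]
  exact congrArg _ (_root_.funext fun j => (hR.sum_killingForm_grad_smul hinv hgrad j y).symm)
end

section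
/- Let L ⊂ S(g) be the graded ideal of polynomial functions vanishing on Sing g. If 0 ≠ f ∈ L is homogeneous of degree k, then k ≥ r, the number of positive roots. (Proof idea: f restricted to some Cartan subalgebra a is nonzero and must be divisible by every positive root of (a,g).) -/
open Module MvPolynomial

namespace MvPolynomial

variable {ι K : Type*} [Field K]

/-- The restriction of a multivariate polynomial to the affine line `t ↦ a + t • v`. -/
noncomputable def restrictLine (a v : ι → K) : MvPolynomial ι K →ₐ[K] Polynomial K :=
  aeval fun i ↦ Polynomial.C (a i) + Polynomial.C (v i) * Polynomial.X

lemma restrictLine_X (a v : ι → K) (i : ι) :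
    restrictLine a v (X i) = Polynomial.C (a i) + Polynomial.C (v i) * Polynomial.X := by
  simp [restrictLine]

lemma eval_restrictLine (a v : ι → K) (P : MvPolynomial ι K) (t : K) :
    (restrictLine a v P).eval t = eval (fun i ↦ a i + t * v i) P := by
  induction P using MvPolynomial.induction_on with
  | C c => simp [restrictLine]
  | add p q hp hq => simp [hp, hq]
  | mul_X p i hp =>
    rw [map_mul, Polynomial.eval_mul, hp, map_mul]
    simp [restrictLine_X, mul_comm t]

lemma natDegree_restrictLine_le (a v : ι → K) (P : MvPolynomial ι K) :
    (restrictLine a v P).natDegree ≤ P.totalDegree := by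
  simpa [restrictLine] using aeval_natDegree_le (n := 1) P le_rfl
    (fun i ↦ Polynomial.C (a i) + Polynomial.C (v i) * Polynomial.X) (fun i ↦ by compute_degree)

lemma derivative_restrictLine [Fintype ι] (a v : ι → K) (P : MvPolynomial ι K) :
    (restrictLine a v P).derivative =
      ∑ i, Polynomial.C (v i) * restrictLine a v (pderiv i P) := by
  classical
  induction P using MvPolynomial.induction_on with
  | C c => simp [restrictLine]
  | add p q hp hq => simp [hp, hq, mul_add, Finset.sum_add_distrib]
  | mul_X p i hp =>
    simp only [map_mul, Polynomial.derivative_mul, hp, Derivation.leibniz, smul_eq_mul, map_add,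
      mul_add, Finset.sum_add_distrib, pderiv_X, Finset.sum_mul]
    rw [add_comm]
    congr 1
    · rw [Finset.sum_eq_single i]
      · simpa [restrictLine_X] using mul_comm _ _
      · intro j _ hj
        simp [hj.symm]
      · simp
    · exact Finset.sum_congr rfl fun j _ ↦ by ring

/-- A homogeneous polynomial function vanishing on a nonempty set which contains, through each of
its points, infinitely many points of lines in directions spanning the whole space, is zero. -/
lemma IsHomogeneous.eq_zero_of_forall_span_eq_top [CharZero K] [Fintype ι]
    {V : Type*} [AddCommGroup V] [Module K V] (b : Basis ι K V) {S : Set V} (hne : S.Nonempty)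
    (hS : ∀ x ∈ S, Submodule.span K {y : V | {t : K | x + t • y ∈ S}.Infinite} = ⊤)
    {k : ℕ} {P : MvPolynomial ι K} (hP : P.IsHomogeneous k)
    (hvan : ∀ x ∈ S, eval (fun i ↦ b.repr x i) P = 0) : P = 0 := by
  induction k generalizing P with
  | zero =>
    obtain ⟨x, hx⟩ := hne
    rw [← totalDegree_zero_iff_isHomogeneous, totalDegree_eq_zero_iff_eq_C] at hP
    have := hvan x hx
    rw [hP, eval_C] at this
    rw [hP, this, C_0]
  | succ k ih =>
    have hd (i : ι) : pderiv i P = 0 := by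
      refine ih (by simpa using hP.pderiv (i := i)) fun x hx ↦ ?_
      let D : V →ₗ[K] K := ∑ j, eval (fun i ↦ b.repr x i) (pderiv j P) • b.coord j
      have hD : D = 0 := by
        rw [← LinearMap.ker_eq_top, eq_top_iff, ← hS x hx, Submodule.span_le]
        intro y hy
        have h0 : restrictLine (fun i ↦ b.repr x i) (fun i ↦ b.repr y i) P = 0 := by
          refine Polynomial.eq_zero_of_infinite_isRoot _ (Set.Infinite.mono (fun t ht ↦ ?_) hy)
          have := hvan _ ht
          simpa [Polynomial.IsRoot, eval_restrictLine] using this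
        have h1 := congrArg (Polynomial.eval 0)
          (derivative_restrictLine (fun i ↦ b.repr x i) (fun i ↦ b.repr y i) P)
        rw [h0] at h1
        simp only [Polynomial.derivative_zero, Polynomial.eval_zero, Polynomial.eval_finsetSum,
          Polynomial.eval_mul, Polynomial.eval_C, eval_restrictLine, zero_mul, add_zero] at h1
        simp only [SetLike.mem_coe, LinearMap.mem_ker, D, LinearMap.sum_apply,
          LinearMap.smul_apply, Basis.coord_apply, smul_eq_mul]
        rw [h1]
        exact Finset.sum_congr rfl fun j _ ↦ mul_comm _ _
      have := LinearMap.congr_fun hD (b i)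
      classical
      simpa [D, Finsupp.single_apply] using this
    have := hP.sum_X_mul_pderiv
    simp only [hd, mul_zero, Finset.sum_const_zero, nsmul_eq_mul] at this
    have h2 : ((k + 1 : ℕ) : MvPolynomial ι K) ≠ 0 := by exact_mod_cast k.succ_ne_zero
    exact (mul_eq_zero.mp this.symm).resolve_left h2

end MvPolynomial

namespace LieAlgebra.IsKilling

open LieModule

variable {K L : Type*} [Field K] [CharZero K] [LieRing L] [LieAlgebra K L] [FiniteDimensional K L]
  [IsKilling K L] (H : LieSubalgebra K L) [H.IsCartanSubalgebra] [IsTriangularizable K H L]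

lemma exists_lieEquiv_apply_eq_add_of_mem_rootSpace {α : Weight K H L} (hα : α.IsNonZero)
    {h : H} (hh : α h ≠ 0) {y : L} (hy : y ∈ rootSpace H α) :
    ∃ g : L ≃ₗ⁅K⁆ L, g h = h + y := by
  let _ : Module ℚ L := Module.compHom L (algebraMap ℚ K)
  let _ : LieAlgebra ℚ L := { lie_smul := fun q x y ↦ lie_smul (algebraMap ℚ K q) x y }
  set e : L := (-(α h)⁻¹) • y with he
  have hey : e ∈ rootSpace H α := (rootSpace H α).smul_mem _ hy
  have hnil : IsNilpotent (LieDerivation.ad K L e).toLinearMap := by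
    have := LieAlgebra.isNilpotent_ad_of_mem_rootSpace H
      (show (α : H → K) ≠ 0 from hα) hey
    rwa [← LieDerivation.coe_ad_apply_eq_ad_apply] at this
  have hlie : ⁅(h : L), y⁆ = α h • y := lie_eq_smul_of_mem_rootSpace hy h
  have h1 : ⁅e, (h : L)⁆ = y := by
    rw [← lie_skew, he, lie_smul, hlie, smul_smul, neg_mul, inv_mul_cancel₀ hh]
    simp
  have h2 : ⁅e, y⁆ = 0 := by simp [he]
  refine ⟨LieDerivation.exp _ hnil, ?_⟩
  have h3 := IsNilpotent.exp_smul_eq_sum (a := (LieDerivation.ad K L e).toLinearMap)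
    (m := (h : L)) (k := 2) (by simp [pow_two, h1, h2]) hnil
  rw [LieDerivation.exp_map_apply]
  simpa [Finset.sum_range_succ, h1] using h3

/-- The directions `y` through `g h`, with `h` regular in `H` and `g` an automorphism, for which
infinitely many points of the line remain conjugate to regular elements of `H`, span `L`. -/
lemma span_infinite_conj_regular_eq_top (g : L ≃ₗ⁅K⁆ L) {h : H}
    (hh : ∀ α : Weight K H L, α.IsNonZero → α h ≠ 0) :
    Submodule.span K {y : L | {t : K | ∃ (g' : L ≃ₗ⁅K⁆ L) (h' : H),
      (∀ α : Weight K H L, α.IsNonZero → α h' ≠ 0) ∧ g' h' = g h + t • y}.Infinite} = ⊤ := by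
  set N := Submodule.span K {y : L | {t : K | ∃ (g' : L ≃ₗ⁅K⁆ L) (h' : H),
      (∀ α : Weight K H L, α.IsNonZero → α h' ≠ 0) ∧ g' h' = g h + t • y}.Infinite} with hN
  have hroot (α : Weight K H L) (hα : α.IsNonZero) (y : L) (hy : y ∈ rootSpace H α) :
      g y ∈ N := by
    refine Submodule.subset_span ?_
    refine Set.infinite_univ.mono fun t _ ↦ ?_
    obtain ⟨g', hg'⟩ := exists_lieEquiv_apply_eq_add_of_mem_rootSpace H hα (hh α hα)
      ((rootSpace H α).smul_mem t hy)
    exact ⟨g'.trans g, h, hh, by simp [hg']⟩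
  have hcartan (y : H) : g y ∈ N := by
    refine Submodule.subset_span ?_
    have hfin : {t : K | ∃ α : Weight K H L, α.IsNonZero ∧ α (h + t • y) = 0}.Finite := by
      have : {t : K | ∃ α : Weight K H L, α.IsNonZero ∧ α (h + t • y) = 0} ⊆
          Set.range fun α : Weight K H L ↦ -(α h) / α y := by
        rintro t ⟨α, hα, ht⟩
        have ht' : α h + t * α y = 0 := by
          have := α.toLinear.map_add h (t • y)
          rw [map_smul] at this
          simpa [ht] using this.symm
        have : α y ≠ 0 := fun h0 ↦ hh α hα (by simpa [h0] using ht')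
        refine ⟨α, ?_⟩
        field_simp
        linear_combination -ht'
      exact (Set.finite_range _).subset this
    refine hfin.infinite_compl.mono fun t ht ↦ ?_
    simp only [Set.mem_compl_iff, Set.mem_ofPred_eq, not_exists, not_and] at ht
    exact ⟨g, h + t • y, ht, by simp⟩
  have hcomap : N.comap (g : L →ₗ[K] L) = ⊤ := by
    have := congrArg LieSubmodule.toSubmodule (cartan_sup_iSup_rootSpace_eq_top (K := K) H)
    simp only [LieSubmodule.sup_toSubmodule, LieSubmodule.iSup_toSubmodule,
      LieSubmodule.top_toSubmodule] at this
    rw [eq_top_iff, ← this, sup_le_iff, iSup₂_le_iff]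
    exact ⟨fun y hy ↦ hcartan ⟨y, hy⟩, fun α hα y hy ↦ hroot α hα y hy⟩
  rw [eq_top_iff]
  intro y _
  have : g.symm y ∈ N.comap (g : L →ₗ[K] L) := hcomap ▸ Submodule.mem_top
  simpa using this

omit [IsKilling K L] [IsTriangularizable K H L] in
lemma exists_regular : ∃ h : H, ∀ α : Weight K H L, α.IsNonZero → α h ≠ 0 := by
  obtain ⟨h, hh⟩ := Module.Dual.exists_forall_ne_zero_of_forall_exists
    (fun α : {α : Weight K H L // α.IsNonZero} ↦ α.1.toLinear) fun α ↦ by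
      by_contra! hc
      exact α.2 (funext hc)
  exact ⟨h, fun α hα ↦ hh ⟨α, hα⟩⟩

/-- A nonzero homogeneous polynomial function does not vanish at some conjugate of a regular
element of a splitting Cartan subalgebra. -/
lemma exists_conj_regular_eval_ne_zero {ι : Type*} [Fintype ι] (b : Module.Basis ι K L) {k : ℕ}
    {P : MvPolynomial ι K} (hP : P.IsHomogeneous k) (hP0 : P ≠ 0) :
    ∃ (g : L ≃ₗ⁅K⁆ L) (h : H), (∀ α : Weight K H L, α.IsNonZero → α h ≠ 0) ∧
      eval (fun i ↦ b.repr (g h) i) P ≠ 0 := by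
  by_contra! hc
  obtain ⟨h₀, hh₀⟩ := exists_regular (K := K) H
  refine hP0 (hP.eq_zero_of_forall_span_eq_top b (S := {x : L | ∃ (g : L ≃ₗ⁅K⁆ L) (h : H),
    (∀ α : Weight K H L, α.IsNonZero → α h ≠ 0) ∧ g h = x})
    ⟨h₀, LieEquiv.refl, h₀, hh₀, rfl⟩ ?_ ?_)
  · rintro _ ⟨g, h, hh, rfl⟩
    exact span_infinite_conj_regular_eq_top H g hh
  · rintro _ ⟨g, h, hh, rfl⟩
    exact hc g h hh

lemma finrank_lt_finrank_ker_ad {α : Weight K H L} (hα : α.IsNonZero) {h : H} (hh : α h = 0)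
    (g : L ≃ₗ⁅K⁆ L) :
    finrank K H < finrank K (LinearMap.ker (LieAlgebra.ad K L (g h))) := by
  obtain ⟨e, he, he0⟩ := α.exists_ne_zero
  have hlie : ⁅(h : L), e⁆ = 0 := by
    have : ⁅(h : L), e⁆ = α h • e := lie_eq_smul_of_mem_rootSpace he h
    rw [this, hh, zero_smul]
  have hle : H.toSubmodule < LinearMap.ker (LieAlgebra.ad K L (h : L)) := by
    refine SetLike.lt_iff_le_and_exists.mpr ⟨fun y hy ↦ ?_, e, by simpa using hlie, fun heH ↦ ?_⟩
    · have : ⁅h, (⟨y, hy⟩ : H)⁆ = 0 := trivial_lie_zero _ _ _ _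
      simpa using congrArg Subtype.val this
    · obtain ⟨x, hx⟩ : ∃ x, α x ≠ 0 := by
        by_contra! hc
        exact hα (funext hc)
      have h1 : ⁅(x : L), e⁆ = α x • e := lie_eq_smul_of_mem_rootSpace he x
      have h2 : ⁅x, (⟨e, heH⟩ : H)⁆ = 0 := trivial_lie_zero _ _ _ _
      have h3 : ⁅(x : L), e⁆ = 0 := by simpa using congrArg Subtype.val h2
      rw [h3] at h1
      exact (smul_ne_zero hx he0) h1.symm
  have hmap : (LinearMap.ker (LieAlgebra.ad K L (h : L))).map (g : L →ₗ[K] L) ≤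
      LinearMap.ker (LieAlgebra.ad K L (g h)) := by
    rintro _ ⟨y, hy, rfl⟩
    have hy' : ⁅(h : L), y⁆ = 0 := by simpa using hy
    have := g.map_lie (h : L) y
    rw [hy', map_zero] at this
    simpa using this.symm
  calc finrank K H < finrank K (LinearMap.ker (LieAlgebra.ad K L (h : L))) :=
        Submodule.finrank_lt_finrank_of_lt hle
    _ = _ := (LinearEquiv.finrank_map_eq g.toLinearEquiv _).symm
    _ ≤ _ := Submodule.finrank_mono hmap

lemma finrank_le_finrank_add_card_root : finrank K L ≤ finrank K H + H.root.card := by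
  have := congrArg LieSubmodule.toSubmodule (cartan_sup_iSup_rootSpace_eq_top (K := K) H)
  simp only [LieSubmodule.sup_toSubmodule, LieSubmodule.iSup_toSubmodule,
    LieSubmodule.top_toSubmodule] at this
  have hs (s : Finset (Weight K H L)) (hs : ∀ α ∈ s, α.IsNonZero) :
      finrank K ↥(s.sup fun α ↦ (rootSpace H α).toSubmodule) ≤ s.card := by
    classical
    induction s using Finset.induction_on with
    | empty => simp
    | insert α s hα ih =>
      rw [Finset.sup_insert, Finset.card_insert_of_notMem hα]
      have h1 := finrank_rootSpace_eq_one α (hs α (by simp))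
      have h2 := ih fun β hβ ↦ hs β (by simp [hβ])
      have h3 := Submodule.finrank_add_le_finrank_add_finrank (rootSpace H α).toSubmodule
        (s.sup fun α ↦ (rootSpace H α).toSubmodule)
      change finrank K (rootSpace H α).toSubmodule = 1 at h1
      lia
  have hsup : (⨆ α : Weight K H L, ⨆ (_ : α.IsNonZero), (rootSpace H α).toSubmodule) =
      H.root.sup fun α ↦ (rootSpace H α).toSubmodule := by
    simp [Finset.sup_eq_iSup]
  rw [hsup] at this
  have h1 := Submodule.finrank_add_le_finrank_add_finrank H.toLieSubmodule.toSubmodule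
    (H.root.sup fun α ↦ (rootSpace H α).toSubmodule)
  rw [this, finrank_top] at h1
  exact h1.trans (Nat.add_le_add le_rfl (hs _ (by simp)))

/-- Through a regular element `h` of `H` there is a line along which the only pairs of roots
vanishing simultaneously are pairs of opposite roots. -/
lemma exists_direction_separating_roots {h : H}
    (hh : ∀ α : Weight K H L, α.IsNonZero → α h ≠ 0) :
    ∃ v : H, (∀ α : Weight K H L, α.IsNonZero → α v ≠ 0) ∧
      ∀ α β : Weight K H L, α.IsNonZero → β.IsNonZero → α h * β v = β h * α v →
        β = -α ∨ β = α := by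
  let T := {p : Weight K H L × Weight K H L //
    p.1.IsNonZero ∧ p.2.IsNonZero ∧ p.2 ≠ -p.1 ∧ p.2 ≠ p.1}
  let F : {α : Weight K H L // α.IsNonZero} ⊕ T → Dual K H :=
    Sum.elim (fun α ↦ α.1.toLinear)
      fun p ↦ (p.1.1 h) • p.1.2.toLinear - (p.1.2 h) • p.1.1.toLinear
  obtain ⟨v, hv⟩ := Module.Dual.exists_forall_ne_zero_of_forall_exists F (by
    rintro (⟨α, hα⟩ | ⟨⟨α, β⟩, hα, hβ, hne, hne'⟩)
    · exact ⟨h, hh α hα⟩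
    · by_contra! hc
      have : (β : H → K) = (β h / α h) • (α : H → K) := by
        funext x
        have hx := hc x
        simp only [F, Sum.elim_inr, LinearMap.sub_apply, LinearMap.smul_apply, smul_eq_mul,
          Weight.toLinear_apply] at hx
        have := hh α hα
        simp only [Pi.smul_apply, smul_eq_mul]
        field_simp
        linear_combination hx
      rcases eq_neg_or_eq_of_eq_smul α β hβ _ this with h | h
      exacts [hne h, hne' h])
  refine ⟨v, fun α hα ↦ hv (.inl ⟨α, hα⟩), fun α β hα hβ heq ↦ ?_⟩
  by_contra! hc
  refine hv (.inr ⟨(α, β), hα, hβ, hc.1, hc.2⟩) ?_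
  simp [F, heq]

/-- A nonzero homogeneous polynomial function vanishing at every element whose centralizer is
larger than `H` has degree at least half the number of roots. -/
theorem card_root_le_two_mul_of_vanish_singular {ι : Type*} [Fintype ι] (b : Module.Basis ι K L) {k : ℕ}
    {P : MvPolynomial ι K} (hP : P.IsHomogeneous k) (hP0 : P ≠ 0)
    (hvanish : ∀ x : L, finrank K H < finrank K (LinearMap.ker (LieAlgebra.ad K L x)) →
      eval (fun i ↦ b.repr x i) P = 0) :
    H.root.card ≤ 2 * k := by
  classical
  obtain ⟨g, h, hh, hne⟩ := exists_conj_regular_eval_ne_zero H b hP hP0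
  obtain ⟨v, hv, hsep⟩ := exists_direction_separating_roots H hh
  set p := restrictLine (fun i ↦ b.repr (g h) i) (fun i ↦ b.repr (g v) i) P with hp
  have hpeval (t : K) : p.eval t = eval (fun i ↦ b.repr (g ↑(h + t • v)) i) P := by
    simp [hp, eval_restrictLine]
  have hp0 : p ≠ 0 := by
    intro h0
    have := hpeval 0
    simp only [h0, Polynomial.eval_zero, zero_smul, add_zero] at this
    exact hne this.symm
  let τ : Weight K H L → K := fun α ↦ -(α h) / α v
  have hroots : H.root.image τ ⊆ p.roots.toFinset := by
    intro t ht
    obtain ⟨α, hα, rfl⟩ := Finset.mem_image.mp ht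
    have hα : α.IsNonZero := by simpa using hα
    have hzero : α (h + τ α • v) = 0 := by
      have := α.toLinear.map_add h (τ α • v)
      rw [map_smul] at this
      simp only [Weight.toLinear_apply, smul_eq_mul] at this
      rw [this, div_mul_cancel₀ _ (hv α hα), add_neg_cancel]
    rw [Multiset.mem_toFinset, Polynomial.mem_roots hp0, Polynomial.IsRoot, hpeval]
    exact hvanish _ (finrank_lt_finrank_ker_ad H hα hzero g)
  have hcard : (H.root.image τ).card ≤ k :=
    calc (H.root.image τ).card ≤ p.roots.toFinset.card := Finset.card_le_card hroots
      _ ≤ p.natDegree := (Multiset.toFinset_card_le _).trans (Polynomial.card_roots' p)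
      _ ≤ P.totalDegree := natDegree_restrictLine_le _ _ _
      _ ≤ k := hP.totalDegree_le
  refine (Finset.card_le_mul_card_image H.root 2 fun t ht ↦ ?_).trans
    (Nat.mul_le_mul_left 2 hcard)
  obtain ⟨α, hα, rfl⟩ := Finset.mem_image.mp ht
  have hα : α.IsNonZero := by simpa using hα
  refine (Finset.card_le_card (t := {-α, α}) fun β hβ ↦ ?_).trans Finset.card_le_two
  simp only [Finset.mem_filter, Finset.mem_univ, true_and, τ] at hβ
  obtain ⟨hβ, heq⟩ := hβ
  rw [div_eq_div_iff (hv β hβ) (hv α hα)] at heq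
  have := hsep α β hα hβ (by linear_combination heq)
  simpa using this

end LieAlgebra.IsKilling

/-- Let `L ⊆ S(g)` be the graded ideal of polynomial functions vanishing on the cone
`Sing g` of singular elements of a complex semisimple Lie algebra `g`.  If
`0 ≠ f ∈ L` is homogeneous of degree `k` (as a polynomial in the coordinates of a
basis `b` of `g`), then `k ≥ r`, the number of positive roots
(`dim g = rank g + 2r`). -/
theorem stmt18 (L : Type*) [LieRing L] [LieAlgebra ℂ L] [FiniteDimensional ℂ L]
    [LieAlgebra.IsSemisimple ℂ L]
    (H : LieSubalgebra ℂ L) [H.IsCartanSubalgebra]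
    (n r : ℕ) (hn : finrank ℂ L = n) (hnr : n = finrank ℂ H + 2 * r)
    (b : Basis (Fin n) ℂ L)
    (k : ℕ) (P : MvPolynomial (Fin n) ℂ) (hPhom : P.IsHomogeneous k) (hP0 : P ≠ 0)
    (hvanish : ∀ x : L,
      finrank ℂ H < finrank ℂ (LinearMap.ker (LieAlgebra.ad ℂ L x)) →
        MvPolynomial.eval (fun i => b.repr x i) P = 0) :
    r ≤ k := by
  have hle := LieAlgebra.IsKilling.card_root_le_two_mul_of_vanish_singular H b hPhom hP0 hvanish
  have hdim := LieAlgebra.IsKilling.finrank_le_finrank_add_card_root (K := ℂ) H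
  lia
end
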